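/- Let $\mathbb H=\mathbb R^3$ be the Heisenberg group with product $(x_1,y_1,t_1)\star(x_2,y_2,t_2)=(x_1+x_2,\,y_1+y_2,\,t_1+t_2+2(x_2y_1-x_1y_2))$, Korányi norm $\|(x,y,t)\|=((x^2+y^2)^2+t^2)^{1/4}$, metric $d(p,q)=\|q^{-1}\star p\|$, and Lebesgue measure; write $B(r)=\{p:\|p\|<r\}$. For a homeomorphism $f:\mathbb H\to\mathbb H$ (onto $\mathbb H$) and $p\in\mathbb H$ put $$H_f(p)=\limsup_{r\to0^+}\frac{\sup_{d(p,q)\le r}d(f(p),f(q))}{\inf_{d(p,q)\ge r}d(f(p),f(q))}\in[1,\infty].$$ The map $f$ is quasiconformal if $H_f$ is bounded on $\mathbb H$ by a finite constant, and $K$-quasiconformal if moreover $H_f\le K$ almost everywhere. Let $\mathcal Q_0(K)$ be the set of $K$-quasiconformal mappings $g$ of $\mathbb H$ with $g(0)=0$ and $\|g(p)\|=1$ for some $p$ with $\|p\|=1$. Given $R>0$ and $K\ge1$, there exists $R'=R'(K,R)>0$ such that $g(B(R))\subseteq B(R')$ for every $g\in\mathcal Q_0(K)$. -/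

import Mathlib

open MeasureTheory Filter Set Topology
open scoped ENNReal NNReal

noncomputable section

/-- The underlying space of the Heisenberg group: `ℝ³` with its usual topology and Lebesgue
measure. -/
abbrev HG : Type := ℝ × ℝ × ℝ

namespace Heis

/-- Heisenberg group product. -/
def mul (p q : HG) : HG :=
  (p.1 + q.1, p.2.1 + q.2.1, p.2.2 + q.2.2 + 2 * (q.1 * p.2.1 - p.1 * q.2.1))

/-- Heisenberg group inverse. -/
def inv (p : HG) : HG := (-p.1, -p.2.1, -p.2.2)

/-- Korányi norm. -/
def knorm (p : HG) : ℝ := ((p.1 ^ 2 + p.2.1 ^ 2) ^ 2 + p.2.2 ^ 2) ^ ((1 : ℝ) / 4)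

/-- Heisenberg (Korányi) metric `d(p,q) = ‖q⁻¹⋆p‖`. -/
def d (p q : HG) : ℝ := knorm (mul (inv q) p)

/-- Open ball for the Heisenberg metric. -/
def ball (p : HG) (r : ℝ) : Set HG := {q | d p q < r}

/-- Pointwise dilatation `H_f(p)`, with values in `[0,∞]`, so that an unbounded quotient gives
`∞`. For a homeomorphism `f` and `r > 0` the numerator and the denominator are positive and
finite. -/
def dilat (f : HG → HG) (p : HG) : ℝ≥0∞ :=
  limsup (fun r : ℝ =>
      (⨆ (q : HG) (_ : d p q ≤ r), ENNReal.ofReal (d (f p) (f q))) /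
        (⨅ (q : HG) (_ : r ≤ d p q), ENNReal.ofReal (d (f p) (f q))))
    (𝓝[>] 0)

/-- `f` is a quasiconformal mapping of `ℍ`: a homeomorphism of `ℍ` onto itself whose dilatation
is bounded by a finite constant at every point. -/
def IsQC (f : HG → HG) : Prop :=
  IsHomeomorph f ∧ ∃ M : ℝ≥0, ∀ p : HG, dilat f p ≤ (M : ℝ≥0∞)

/-- `f` is a `K`-quasiconformal mapping of `ℍ`. -/
def IsKQC (K : ℝ) (f : HG → HG) : Prop :=
  IsQC f ∧ ∀ᵐ p ∂(volume : Measure HG), dilat f p ≤ ENNReal.ofReal K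

/-- The class `𝒬₀(K)`. -/
def Q0 (K : ℝ) : Set (HG → HG) :=
  {g | IsKQC K g ∧ g 0 = 0 ∧ ∃ p : HG, knorm p = 1 ∧ knorm (g p) = 1}

end Heis

end

namespace Heis

/-! ### Group law, dilations and the Korányi norm -/

lemma mul_assoc' (p q r : HG) : mul (mul p q) r = mul p (mul q r) := by
  ext <;> simp only [mul] <;> ring

lemma inv_mul_cancel_left' (p q : HG) : mul (inv p) (mul p q) = q := by
  ext <;> simp only [mul, inv] <;> ring

lemma mul_inv_cancel_left' (p q : HG) : mul p (mul (inv p) q) = q := by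
  ext <;> simp only [mul, inv] <;> ring

lemma mul_zero' (p : HG) : mul p 0 = p := by
  ext <;> simp [mul]

lemma inv_zero' : inv 0 = 0 := by
  ext <;> simp [inv]

lemma zero_mul' (p : HG) : mul 0 p = p := by
  ext <;> simp [mul]

lemma inv_mul_rev (p q : HG) : inv (mul p q) = mul (inv q) (inv p) := by
  ext <;> simp only [mul, inv] <;> ring

lemma inv_inv' (p : HG) : inv (inv p) = p := by
  ext <;> simp [inv]

/-- Heisenberg dilations. -/
noncomputable def dil (r : ℝ) (p : HG) : HG := (r * p.1, r * p.2.1, r ^ 2 * p.2.2)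

lemma knorm_nonneg (p : HG) : 0 ≤ knorm p := by
  unfold knorm; positivity

lemma knorm_pow_four (p : HG) : knorm p ^ 4 = (p.1 ^ 2 + p.2.1 ^ 2) ^ 2 + p.2.2 ^ 2 := by
  unfold knorm
  rw [← Real.rpow_natCast, ← Real.rpow_mul (by positivity)]
  norm_num

lemma knorm_sq (p : HG) : knorm p ^ 2 = ‖(⟨p.1 ^ 2 + p.2.1 ^ 2, p.2.2⟩ : ℂ)‖ := by
  rw [Complex.norm_eq_sqrt_sq_add_sq]
  symm
  rw [Real.sqrt_eq_iff_mul_self_eq (by positivity) (by positivity)]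
  have := knorm_pow_four p
  simp only
  linarith [this, show knorm p ^ 2 * knorm p ^ 2 = knorm p ^ 4 by ring]

lemma knorm_eq_of_pow_four {p : HG} {a : ℝ} (ha : 0 ≤ a)
    (h : (p.1 ^ 2 + p.2.1 ^ 2) ^ 2 + p.2.2 ^ 2 = a ^ 4) : knorm p = a := by
  rw [← knorm_pow_four] at h
  exact (pow_left_inj₀ (knorm_nonneg p) ha (by norm_num)).1 h

@[simp] lemma knorm_zero : knorm 0 = 0 := knorm_eq_of_pow_four le_rfl (by simp)

@[simp] lemma knorm_inv (p : HG) : knorm (inv p) = knorm p :=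
  knorm_eq_of_pow_four (knorm_nonneg p) (by rw [knorm_pow_four]; simp [inv])

lemma knorm_dil {r : ℝ} (hr : 0 ≤ r) (p : HG) : knorm (dil r p) = r * knorm p := by
  apply knorm_eq_of_pow_four (mul_nonneg hr (knorm_nonneg p))
  rw [mul_pow, knorm_pow_four]
  simp only [dil]; ring

lemma sq_add_sq_le_knorm_sq (p : HG) : p.1 ^ 2 + p.2.1 ^ 2 ≤ knorm p ^ 2 := by
  have := knorm_pow_four p
  apply le_of_sq_le_sq _ (by positivity)
  nlinarith [sq_nonneg p.2.2]

lemma abs_snd_snd_le_knorm_sq (p : HG) : |p.2.2| ≤ knorm p ^ 2 := by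
  have := knorm_pow_four p
  apply abs_le_of_sq_le_sq _ (by positivity)
  nlinarith [sq_nonneg (p.1 ^ 2 + p.2.1 ^ 2)]

lemma abs_fst_le_knorm (p : HG) : |p.1| ≤ knorm p := by
  apply abs_le_of_sq_le_sq _ (knorm_nonneg p)
  nlinarith [sq_add_sq_le_knorm_sq p, sq_nonneg p.2.1]

lemma abs_snd_fst_le_knorm (p : HG) : |p.2.1| ≤ knorm p := by
  apply abs_le_of_sq_le_sq _ (knorm_nonneg p)
  nlinarith [sq_add_sq_le_knorm_sq p, sq_nonneg p.1]

lemma knorm_eq_zero {p : HG} (h : knorm p = 0) : p = 0 := by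
  have h1 := abs_fst_le_knorm p
  have h2 := abs_snd_fst_le_knorm p
  have h3 := abs_snd_snd_le_knorm_sq p
  rw [h] at h1 h2 h3
  norm_num at h3
  ext
  · simpa using h1
  · simpa using h2
  · simpa using h3

lemma knorm_mul_le (p q : HG) : knorm (mul p q) ≤ knorm p + knorm q := by
  have hp := knorm_nonneg p
  have hq := knorm_nonneg q
  apply le_of_sq_le_sq _ (by positivity)
  set z : ℂ := ⟨2 * (p.1 * q.1 + p.2.1 * q.2.1), 2 * (q.1 * p.2.1 - p.1 * q.2.1)⟩ with hz
  have h1 : ‖z‖ ≤ 2 * (knorm p * knorm q) := by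
    rw [Complex.norm_eq_sqrt_sq_add_sq]
    apply Real.sqrt_le_iff.2 ⟨by positivity, ?_⟩
    have := mul_le_mul (sq_add_sq_le_knorm_sq p) (sq_add_sq_le_knorm_sq q) (by positivity)
      (by positivity)
    simp only [hz]
    nlinarith [this]
  have h2 : (⟨(mul p q).1 ^ 2 + (mul p q).2.1 ^ 2, (mul p q).2.2⟩ : ℂ)
      = ⟨p.1 ^ 2 + p.2.1 ^ 2, p.2.2⟩ + ⟨q.1 ^ 2 + q.2.1 ^ 2, q.2.2⟩ + z := by
    apply Complex.ext
    · simp only [mul, hz, Complex.add_re]; ring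
    · simp only [mul, hz, Complex.add_im]
  rw [knorm_sq, h2]
  calc _ ≤ knorm p ^ 2 + knorm q ^ 2 + 2 * (knorm p * knorm q) := by
        rw [knorm_sq p, knorm_sq q]
        exact (norm_add_le _ _).trans (add_le_add (norm_add_le _ _) h1)
    _ = _ := by ring

/-! ### The metric -/

lemma d_nonneg (p q : HG) : 0 ≤ d p q := knorm_nonneg _

@[simp] lemma d_self (p : HG) : d p p = 0 := by
  have : mul (inv p) p = 0 := by ext <;> simp [mul, inv]
  rw [d, this, knorm_zero]

lemma d_comm (p q : HG) : d p q = d q p := by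
  unfold d
  rw [← knorm_inv, inv_mul_rev, inv_inv']

lemma d_triangle (p q r : HG) : d p r ≤ d p q + d q r := by
  unfold d
  have : mul (inv r) p = mul (mul (inv r) q) (mul (inv q) p) := by
    rw [mul_assoc', mul_inv_cancel_left']
  rw [this, add_comm]
  exact knorm_mul_le _ _

lemma d_mul_left (a p q : HG) : d (mul a p) (mul a q) = d p q := by
  unfold d
  rw [inv_mul_rev, mul_assoc', inv_mul_cancel_left']

lemma d_self_mul (p v : HG) : d p (mul p v) = knorm v := by
  have := d_mul_left p 0 v
  rw [mul_zero'] at this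
  rw [this, d_comm, d, inv_zero', zero_mul']

lemma d_zero_left (p : HG) : d 0 p = knorm p := by
  simpa [zero_mul'] using d_self_mul 0 p

lemma d_zero_right (p : HG) : d p 0 = knorm p := by rw [d_comm, d_zero_left]

lemma eq_of_d_eq_zero {p q : HG} (h : d p q = 0) : p = q := by
  have := knorm_eq_zero h
  rw [← mul_inv_cancel_left' q p, this, mul_zero']

lemma abs_knorm_sub_le (p q : HG) : |knorm p - knorm q| ≤ d p q := by
  rw [← d_zero_right, ← d_zero_right, abs_sub_le_iff]
  have h1 := d_triangle p q 0
  have h2 := d_triangle q p 0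
  rw [d_comm q p] at h2
  constructor <;> linarith

lemma ball_subset_ball {p q : HG} {r s : ℝ} (h : d q p + r ≤ s) : ball p r ⊆ ball q s := by
  intro z hz
  have hz : d p z < r := hz
  have := d_triangle q p z
  show d q z < s
  linarith

/-! ### Topology -/

lemma continuous_mul : Continuous fun p : HG × HG => mul p.1 p.2 := by
  unfold mul; fun_prop

lemma continuous_inv : Continuous inv := by
  unfold inv; fun_prop

lemma continuous_knorm : Continuous knorm := by
  unfold knorm
  exact Continuous.rpow_const (by fun_prop) (fun _ => Or.inr (by norm_num))

lemma continuous_d : Continuous fun p : HG × HG => d p.1 p.2 := by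
  unfold d
  exact continuous_knorm.comp
    (continuous_mul.comp ((continuous_inv.comp continuous_snd).prodMk continuous_fst))

lemma continuous_mul_left (p : HG) : Continuous (mul p) :=
  continuous_mul.comp (continuous_const.prodMk continuous_id)

lemma continuous_mul_right (q : HG) : Continuous fun p => mul p q :=
  continuous_mul.comp (continuous_id.prodMk continuous_const)

lemma continuous_d_left (p : HG) : Continuous fun q => d p q := by
  have : Continuous fun q => mul (inv q) p := by unfold mul inv; fun_prop
  exact continuous_knorm.comp this

lemma isOpen_ball (p : HG) (r : ℝ) : IsOpen (ball p r) := by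
  have := isOpen_Iio.preimage (continuous_d_left p) (t := Iio r)
  exact this

lemma measurableSet_ball (p : HG) (r : ℝ) : MeasurableSet (ball p r) :=
  (isOpen_ball p r).measurableSet

lemma mem_ball_self {p : HG} {r : ℝ} (hr : 0 < r) : p ∈ ball p r := by
  show d p p < r
  rwa [d_self]

lemma norm_le_of_knorm_le {p : HG} {r : ℝ} (h : knorm p ≤ r) : ‖p‖ ≤ max r (r ^ 2) := by
  have h0 := knorm_nonneg p
  rw [Prod.norm_def, Prod.norm_def]
  refine max_le ?_ (max_le ?_ ?_)
  · exact ((abs_fst_le_knorm p).trans h).trans (le_max_left _ _)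
  · exact ((abs_snd_fst_le_knorm p).trans h).trans (le_max_left _ _)
  · exact ((abs_snd_snd_le_knorm_sq p).trans (by gcongr)).trans (le_max_right _ _)

lemma isCompact_knorm_le (r : ℝ) : IsCompact {p : HG | knorm p ≤ r} := by
  refine (isCompact_closedBall (0 : HG) (max r (r ^ 2))).of_isClosed_subset
    (isClosed_le continuous_knorm continuous_const) fun p hp => ?_
  simpa using norm_le_of_knorm_le hp

lemma exists_knorm_lt_subset {V : Set HG} (hV : V ∈ 𝓝 (0 : HG)) :
    ∃ ε > 0, ∀ w, knorm w < ε → w ∈ V := by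
  obtain ⟨δ, hδ, h⟩ := Metric.mem_nhds_iff.1 hV
  refine ⟨min δ 1, by positivity, fun w hw => h ?_⟩
  have h1 : knorm w < δ := hw.trans_le (min_le_left _ _)
  have h2 : knorm w < 1 := hw.trans_le (min_le_right _ _)
  have h0 := knorm_nonneg w
  have := norm_le_of_knorm_le (le_refl (knorm w))
  rw [max_eq_left (by nlinarith)] at this
  simpa using this.trans_lt h1

/-! ### Lebesgue measure -/

lemma measurePreserving_mul_right (q : HG) :
    MeasurePreserving (fun p : HG => mul p q) volume volume := by
  have key : MeasurePreserving
      (fun p : ℝ × (ℝ × ℝ) => (p.1 + q.1, ((p.2.1 + q.2.1,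
        p.2.2 + (q.2.2 + 2 * (q.1 * p.2.1 - p.1 * q.2.1))) : ℝ × ℝ)))
      (volume.prod (volume.prod volume)) (volume.prod (volume.prod volume)) := by
    refine MeasurePreserving.skew_product (g := fun x (p : ℝ × ℝ) => ((p.1 + q.2.1,
        p.2 + (q.2.2 + 2 * (q.1 * p.1 - x * q.2.1))) : ℝ × ℝ))
      (measurePreserving_add_right volume q.1) (by fun_prop) (ae_of_all _ fun x => ?_)
    have := MeasurePreserving.skew_product (g := fun y (t : ℝ) =>
        t + (q.2.2 + 2 * (q.1 * y - x * q.2.1)))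
      (μb := (volume : Measure ℝ)) (μd := (volume : Measure ℝ))
      (measurePreserving_add_right (volume : Measure ℝ) q.2.1) (by fun_prop)
      (ae_of_all _ fun y => (measurePreserving_add_right volume _).map_eq)
    exact this.map_eq
  have h : (fun p : HG => mul p q) = fun p : ℝ × (ℝ × ℝ) => (p.1 + q.1, ((p.2.1 + q.2.1,
        p.2.2 + (q.2.2 + 2 * (q.1 * p.2.1 - p.1 * q.2.1))) : ℝ × ℝ)) := by
    funext p
    ext <;> simp only [mul]; ring
  rw [← h] at key
  exact key

lemma measurePreserving_mul_left (q : HG) :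
    MeasurePreserving (mul q) volume volume := by
  have key : MeasurePreserving
      (fun p : ℝ × (ℝ × ℝ) => (q.1 + p.1, ((q.2.1 + p.2.1,
        (q.2.2 + 2 * (p.1 * q.2.1 - q.1 * p.2.1)) + p.2.2) : ℝ × ℝ)))
      (volume.prod (volume.prod volume)) (volume.prod (volume.prod volume)) := by
    refine MeasurePreserving.skew_product (g := fun x (p : ℝ × ℝ) => ((q.2.1 + p.1,
        (q.2.2 + 2 * (x * q.2.1 - q.1 * p.1)) + p.2) : ℝ × ℝ))
      (measurePreserving_add_left volume q.1) (by fun_prop) (ae_of_all _ fun x => ?_)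
    have := MeasurePreserving.skew_product (g := fun y (t : ℝ) =>
        (q.2.2 + 2 * (x * q.2.1 - q.1 * y)) + t)
      (μb := (volume : Measure ℝ)) (μd := (volume : Measure ℝ))
      (measurePreserving_add_left (volume : Measure ℝ) q.2.1) (by fun_prop)
      (ae_of_all _ fun y => (measurePreserving_add_left volume _).map_eq)
    exact this.map_eq
  have h : (fun p : HG => mul q p) = fun p : ℝ × (ℝ × ℝ) => (q.1 + p.1, ((q.2.1 + p.2.1,
        (q.2.2 + 2 * (p.1 * q.2.1 - q.1 * p.2.1)) + p.2.2) : ℝ × ℝ)) := by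
    funext p
    ext <;> simp only [mul]; ring
  rw [← h] at key
  exact key

/-- Volume of the unit ball. -/
noncomputable def unitVol : ℝ≥0∞ := volume (ball 0 1)

lemma unitVol_ne_zero : unitVol ≠ 0 :=
  ((isOpen_ball 0 1).measure_pos volume ⟨0, mem_ball_self one_pos⟩).ne'

lemma unitVol_ne_top : unitVol ≠ ∞ := by
  refine ((measure_mono ?_).trans_lt (isCompact_knorm_le 1).measure_lt_top).ne
  intro p hp
  have hp : d 0 p < 1 := hp
  rw [d_zero_left] at hp
  exact hp.le

lemma volume_ball_zero {r : ℝ} (hr : 0 < r) :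
    volume (ball 0 r) = ENNReal.ofReal r ^ 4 * unitVol := by
  let T : HG →ₗ[ℝ] HG := (r • LinearMap.id).prodMap
    ((r • LinearMap.id).prodMap (r ^ 2 • LinearMap.id))
  have hdet : LinearMap.det T = r ^ 4 := by
    simp only [T, LinearMap.det_prodMap, LinearMap.det_smul, LinearMap.det_id,
      Module.finrank_self]
    ring
  have hT : ∀ p, T p = dil r p := fun p => by simp [T, dil]
  have : (volume : Measure HG).IsAddHaarMeasure :=
    Measure.prod.instIsAddHaarMeasure (volume : Measure ℝ) (volume : Measure (ℝ × ℝ))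
  have h := Measure.addHaar_preimage_linearMap (volume : Measure HG) (f := T)
    (by rw [hdet]; positivity) (ball 0 r)
  have hpre : T ⁻¹' (ball 0 r) = ball 0 1 := by
    ext p
    simp only [mem_preimage, ball, mem_ofPred_eq, d_zero_left, hT, knorm_dil hr.le]
    constructor <;> intro h <;> nlinarith
  rw [hpre, hdet, abs_of_pos (by positivity)] at h
  rw [unitVol, h, ← mul_assoc, ← ENNReal.ofReal_pow hr.le, ← ENNReal.ofReal_mul (by positivity),
    mul_inv_cancel₀ (by positivity), ENNReal.ofReal_one, one_mul]

lemma preimage_mul_left_ball (q p : HG) (r : ℝ) : mul q ⁻¹' ball (mul q p) r = ball p r := by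
  ext z
  simp only [mem_preimage, ball, mem_ofPred_eq, d_mul_left]

lemma volume_ball (p : HG) {r : ℝ} (hr : 0 < r) :
    volume (ball p r) = ENNReal.ofReal r ^ 4 * unitVol := by
  rw [← volume_ball_zero hr, ← preimage_mul_left_ball p 0, mul_zero',
    (measurePreserving_mul_left p).measure_preimage (measurableSet_ball _ _).nullMeasurableSet]

lemma volume_ball_ne_zero (p : HG) {r : ℝ} (hr : 0 < r) : volume (ball p r) ≠ 0 := by
  rw [volume_ball p hr]
  exact mul_ne_zero (pow_ne_zero _ (by simpa using hr)) unitVol_ne_zero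

lemma volume_ball_ne_top (p : HG) {r : ℝ} (hr : 0 < r) : volume (ball p r) ≠ ∞ := by
  rw [volume_ball p hr]
  exact ENNReal.mul_ne_top (ENNReal.pow_ne_top ENNReal.ofReal_ne_top) unitVol_ne_top

/-! ### Horizontal segments and the Poincaré inequality -/

/-- The horizontal one-parameter subgroup in direction `e`. -/
def hor (e : ℝ × ℝ) (s : ℝ) : HG := (s * e.1, s * e.2, 0)

lemma continuous_hor (e : ℝ × ℝ) : Continuous (hor e) := by
  unfold hor; fun_prop

lemma knorm_hor {e : ℝ × ℝ} (he : e.1 ^ 2 + e.2 ^ 2 = 1) (s : ℝ) : knorm (hor e s) = |s| := by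
  apply knorm_eq_of_pow_four (abs_nonneg s)
  have h4 : |s| ^ 4 = s ^ 4 := by
    rw [show |s| ^ 4 = (|s| ^ 2) ^ 2 by ring, sq_abs]; ring
  simp only [hor]
  rw [h4, show (s * e.1) ^ 2 + (s * e.2) ^ 2 = s ^ 2 * (e.1 ^ 2 + e.2 ^ 2) by ring, he]
  ring

lemma d_hor {e : ℝ × ℝ} (he : e.1 ^ 2 + e.2 ^ 2 = 1) (p : HG) (s s' : ℝ) :
    d (mul p (hor e s)) (mul p (hor e s')) = |s - s'| := by
  rw [d_mul_left, d, show mul (inv (hor e s')) (hor e s) = hor e (s - s') by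
    ext <;> simp only [mul, inv, hor] <;> ring, knorm_hor he]

lemma exists_eq_hor (a b : ℝ) : ∃ (e : ℝ × ℝ) (S : ℝ), e.1 ^ 2 + e.2 ^ 2 = 1 ∧ 0 ≤ S ∧
    S ^ 2 = a ^ 2 + b ^ 2 ∧ hor e S = (a, b, 0) := by
  by_cases h : a ^ 2 + b ^ 2 = 0
  · have ha : a = 0 := by nlinarith [sq_nonneg a, sq_nonneg b]
    have hb : b = 0 := by nlinarith [sq_nonneg a, sq_nonneg b]
    exact ⟨(1, 0), 0, by norm_num, le_rfl, by simp [ha, hb], by simp [hor, ha, hb]⟩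
  · have hS : 0 < √(a ^ 2 + b ^ 2) := Real.sqrt_pos.2 (lt_of_le_of_ne (by positivity) (Ne.symm h))
    have hS2 : √(a ^ 2 + b ^ 2) ^ 2 = a ^ 2 + b ^ 2 := Real.sq_sqrt (by positivity)
    refine ⟨(a / √(a ^ 2 + b ^ 2), b / √(a ^ 2 + b ^ 2)), √(a ^ 2 + b ^ 2), ?_, hS.le, hS2, ?_⟩
    · simp only [div_pow, hS2]
      field_simp
    · ext <;> simp only [hor]
      · field_simp
      · field_simp

lemma exists_horizontal_factorization (v : HG) : ∃ a b ξ η : ℝ,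
    v = mul (mul (mul (mul (a, b, 0) (ξ, 0, 0)) (0, η, 0)) (-ξ, 0, 0)) (0, -η, 0) ∧
    a ^ 2 + b ^ 2 ≤ knorm v ^ 2 ∧ ξ ^ 2 ≤ knorm v ^ 2 ∧ η ^ 2 ≤ knorm v ^ 2 := by
  have hc := abs_snd_snd_le_knorm_sq v
  have hs : √|v.2.2| * √|v.2.2| = |v.2.2| := Real.mul_self_sqrt (abs_nonneg _)
  have hv := abs_nonneg v.2.2
  rcases le_total 0 v.2.2 with h | h
  · rw [abs_of_nonneg h] at *
    refine ⟨v.1, v.2.1, √v.2.2 / 2, -(√v.2.2 / 2), ?_, sq_add_sq_le_knorm_sq v, by nlinarith,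
      by nlinarith⟩
    ext <;> simp only [mul]
    · ring
    · ring
    · ring_nf
      nlinarith
  · rw [abs_of_nonpos h] at *
    refine ⟨v.1, v.2.1, √(-v.2.2) / 2, √(-v.2.2) / 2, ?_, sq_add_sq_le_knorm_sq v, by nlinarith,
      by nlinarith⟩
    ext <;> simp only [mul]
    · ring
    · ring
    · ring_nf
      nlinarith

/-- The increments of `u` along almost every horizontal segment are controlled, up to the factor
`A`, by the lower limit of the integrals of `ρ k` over slightly longer segments. -/
def LineBound (u : HG → ℝ) (ρ : ℕ → HG → ℝ≥0∞) (A : ℝ≥0∞) : Prop :=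
  ∀ e : ℝ × ℝ, e.1 ^ 2 + e.2 ^ 2 = 1 → ∀ S : ℝ, 0 ≤ S → ∀ᵐ p : HG,
    edist (u (mul p (hor e S))) (u p) ≤
      A * liminf (fun k : ℕ => ∫⁻ s in Icc (-(2 / ((k : ℝ) + 1))) (S + 2 / ((k : ℝ) + 1)),
        ρ k (mul p (hor e s))) atTop

lemma setLIntegral_ball_mul_right_le {F : HG → ℝ≥0∞} (hF : Measurable F) (x h : HG) (t : ℝ) :
    ∫⁻ p in ball x t, F (mul p h) ≤ ∫⁻ p in ball x (t + knorm h), F p := by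
  rw [← lintegral_indicator (measurableSet_ball _ _), ← lintegral_indicator (measurableSet_ball _ _),
    ← (measurePreserving_mul_right h).lintegral_comp (hF.indicator (measurableSet_ball _ _))]
  refine lintegral_mono fun p => ?_
  by_cases hp : p ∈ ball x t
  · have : mul p h ∈ ball x (t + knorm h) := by
      have h1 : d x p < t := hp
      have h2 := d_triangle x p (mul p h)
      rw [d_self_mul] at h2
      show d x (mul p h) < _
      linarith
    simp [hp, this]
  · simp [hp]

lemma measurable_line {F : HG → ℝ≥0∞} (hF : Measurable F) (e : ℝ × ℝ) :
    Measurable fun z : HG × ℝ => F (mul z.1 (hor e z.2)) :=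
  hF.comp (continuous_mul.comp
    (continuous_fst.prodMk ((continuous_hor e).comp continuous_snd))).measurable

lemma LineBound.setLIntegral_hor_le {u : HG → ℝ} {ρ : ℕ → HG → ℝ≥0∞} {A : ℝ≥0∞}
    (h : LineBound u ρ A) (hρ : ∀ k, Measurable (ρ k)) (hA : A ≠ ∞)
    {e : ℝ × ℝ} (he : e.1 ^ 2 + e.2 ^ 2 = 1) (x : HG) {S r : ℝ} (t : ℝ) (hr : 0 < r) (hS : 0 ≤ S)
    (hSr : S ≤ 2 * r) :
    ∫⁻ p in ball x t, edist (u (mul p (hor e S))) (u p) ≤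
      A * (ENNReal.ofReal (4 * r) *
        liminf (fun k => ∫⁻ y in ball x (t + 3 * r), ρ k y) atTop) := by
  have hmeas : ∀ k : ℕ, Measurable fun p : HG =>
      ∫⁻ s in Icc (-(2 / ((k : ℝ) + 1))) (S + 2 / ((k : ℝ) + 1)), ρ k (mul p (hor e s)) :=
    fun k => (measurable_line (hρ k) e).lintegral_prod_right'
  calc _ ≤ ∫⁻ p in ball x t, A * liminf (fun k : ℕ =>
          ∫⁻ s in Icc (-(2 / ((k : ℝ) + 1))) (S + 2 / ((k : ℝ) + 1)), ρ k (mul p (hor e s)))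
            atTop :=
        lintegral_mono_ae (ae_restrict_of_ae (h e he S hS))
    _ = A * ∫⁻ p in ball x t, liminf (fun k : ℕ =>
          ∫⁻ s in Icc (-(2 / ((k : ℝ) + 1))) (S + 2 / ((k : ℝ) + 1)), ρ k (mul p (hor e s)))
            atTop := lintegral_const_mul' _ _ hA
    _ ≤ A * liminf (fun k : ℕ => ∫⁻ p in ball x t,
          ∫⁻ s in Icc (-(2 / ((k : ℝ) + 1))) (S + 2 / ((k : ℝ) + 1)), ρ k (mul p (hor e s)))
            atTop := by
        gcongr
        exact lintegral_liminf_le hmeas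
    _ ≤ A * liminf (fun k : ℕ => ENNReal.ofReal (4 * r) *
          ∫⁻ y in ball x (t + 3 * r), ρ k y) atTop := by
        gcongr
        refine liminf_le_liminf ?_
        have hlim : Tendsto (fun k : ℕ => 2 / ((k : ℝ) + 1)) atTop (𝓝 0) := by
          have := (tendsto_one_div_add_atTop_nhds_zero_nat (𝕜 := ℝ)).const_mul 2
          simpa [div_eq_mul_inv] using this
        filter_upwards [hlim.eventually (gt_mem_nhds hr)] with k hk
        rw [lintegral_lintegral_swap (measurable_line (hρ k) e).aemeasurable]
        have hk0 : 0 < 2 / ((k : ℝ) + 1) := by positivity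
        calc _ ≤ ∫⁻ s in Icc (-(2 / ((k : ℝ) + 1))) (S + 2 / ((k : ℝ) + 1)),
              ∫⁻ y in ball x (t + 3 * r), ρ k y := by
              refine setLIntegral_mono' measurableSet_Icc fun s hs => ?_
              refine (setLIntegral_ball_mul_right_le (hρ k) x (hor e s) t).trans ?_
              refine lintegral_mono_set (ball_subset_ball ?_)
              rw [d_self, knorm_hor he]
              have : |s| ≤ 3 * r := abs_le.2 ⟨by linarith [hs.1], by linarith [hs.2]⟩
              linarith
          _ ≤ _ := by
              rw [setLIntegral_const, Real.volume_Icc, mul_comm]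
              gcongr
              linarith
    _ = _ := by rw [ENNReal.liminf_const_mul_of_ne_top ENNReal.ofReal_ne_top]

lemma measurable_edist_mul {u : HG → ℝ} (hu : Continuous u) (v w : HG) :
    Measurable fun p => edist (u (mul p v)) (u (mul p w)) :=
  ((hu.comp (continuous_mul_right v)).edist (hu.comp (continuous_mul_right w))).measurable

lemma LineBound.setLIntegral_mul_le {u : HG → ℝ} {ρ : ℕ → HG → ℝ≥0∞} {A : ℝ≥0∞}
    (h : LineBound u ρ A) (hu : Continuous u) (hρ : ∀ k, Measurable (ρ k)) (hA : A ≠ ∞)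
    (x : HG) {r : ℝ} (hr : 0 < r) {v : HG} (hv : knorm v < 2 * r) :
    ∫⁻ p in ball x r, edist (u (mul p v)) (u p) ≤
      5 * (A * (ENNReal.ofReal (4 * r) *
        liminf (fun k => ∫⁻ y in ball x (12 * r), ρ k y) atTop)) := by
  set Q := A * (ENNReal.ofReal (4 * r) *
        liminf (fun k => ∫⁻ y in ball x (12 * r), ρ k y) atTop) with hQ
  have step : ∀ (w : HG) (a b : ℝ), knorm w ≤ 8 * r → a ^ 2 + b ^ 2 ≤ knorm v ^ 2 →
      ∫⁻ p in ball x r, edist (u (mul p (mul w (a, b, 0)))) (u p) ≤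
        (∫⁻ p in ball x r, edist (u (mul p w)) (u p)) + Q := by
    intro w a b hw hab
    obtain ⟨e, S, he, hS, hS2, heq⟩ := exists_eq_hor a b
    have hSr : S ≤ 2 * r := by
      have : S ≤ knorm v := le_of_sq_le_sq (hS2.trans_le hab) (knorm_nonneg v)
      linarith
    rw [← heq]
    calc _ ≤ ∫⁻ p in ball x r, (edist (u (mul p w)) (u p) +
            edist (u (mul (mul p w) (hor e S))) (u (mul p w))) := by
          refine lintegral_mono fun p => ?_
          rw [mul_assoc', add_comm]
          exact edist_triangle _ _ _
      _ = (∫⁻ p in ball x r, edist (u (mul p w)) (u p)) +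
            ∫⁻ p in ball x r, edist (u (mul (mul p w) (hor e S))) (u (mul p w)) := by
          refine lintegral_add_left ?_ _
          simpa [mul_zero'] using measurable_edist_mul hu w 0
      _ ≤ _ := by
          gcongr
          have hm : Measurable fun p => edist (u (mul p (hor e S))) (u p) := by
            simpa [mul_zero'] using measurable_edist_mul hu (hor e S) 0
          refine (setLIntegral_ball_mul_right_le hm x w r).trans ?_
          refine (h.setLIntegral_hor_le hρ hA he x (r + knorm w) hr hS hSr).trans ?_
          rw [hQ]
          gcongr
          refine liminf_le_liminf (Eventually.of_forall fun k => ?_)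
          refine lintegral_mono_set (ball_subset_ball ?_)
          rw [d_self]; linarith
  have hk : ∀ w a b, a ^ 2 + b ^ 2 ≤ knorm v ^ 2 → knorm (mul w (a, b, 0)) ≤ knorm w + 2 * r := by
    intro w a b hab
    obtain ⟨e, S, he, hS, hS2, heq⟩ := exists_eq_hor a b
    have : S ≤ knorm v := le_of_sq_le_sq (hS2.trans_le hab) (knorm_nonneg v)
    have h1 := knorm_mul_le w (hor e S)
    rw [knorm_hor he, abs_of_nonneg hS] at h1
    rw [← heq]; linarith
  obtain ⟨a, b, ξ, η, hv', h1, h2, h3⟩ := exists_horizontal_factorization v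
  have h2' : ξ ^ 2 + 0 ^ 2 ≤ knorm v ^ 2 := by simpa using h2
  have h2'' : (-ξ) ^ 2 + 0 ^ 2 ≤ knorm v ^ 2 := by simpa using h2
  have h3' : 0 ^ 2 + η ^ 2 ≤ knorm v ^ 2 := by simpa using h3
  have h3'' : 0 ^ 2 + (-η) ^ 2 ≤ knorm v ^ 2 := by simpa using h3
  have k1 := hk 0 a b h1
  rw [zero_mul', knorm_zero] at k1
  have k2 := hk (a, b, 0) ξ 0 h2'
  have k3 := hk (mul (a, b, 0) (ξ, 0, 0)) 0 η h3'
  have k4 := hk (mul (mul (a, b, 0) (ξ, 0, 0)) (0, η, 0)) (-ξ) 0 h2''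
  have s1 := step 0 a b (by rw [knorm_zero]; linarith) h1
  rw [zero_mul'] at s1
  have s2 := step (a, b, 0) ξ 0 (by linarith) h2'
  have s3 := step (mul (a, b, 0) (ξ, 0, 0)) 0 η (by linarith) h3'
  have s4 := step (mul (mul (a, b, 0) (ξ, 0, 0)) (0, η, 0)) (-ξ) 0 (by linarith) h2''
  have s5 := step (mul (mul (mul (a, b, 0) (ξ, 0, 0)) (0, η, 0)) (-ξ, 0, 0)) 0 (-η)
    (by linarith) h3''
  rw [← hv'] at s5
  have s0 : ∫⁻ p in ball x r, edist (u (mul p 0)) (u p) = 0 := by simp [mul_zero']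
  calc _ ≤ 0 + Q + Q + Q + Q + Q := by
        rw [s0] at s1
        exact s5.trans (add_le_add_left (s4.trans (add_le_add_left (s3.trans
          (add_le_add_left (s2.trans (add_le_add_left s1 _)) _)) _)) _)
    _ = 5 * Q := by ring

lemma LineBound.poincare {u : HG → ℝ} {ρ : ℕ → HG → ℝ≥0∞} {A : ℝ≥0∞}
    (h : LineBound u ρ A) (hu : Continuous u) (hρ : ∀ k, Measurable (ρ k)) (hA : A ≠ ∞)
    (x : HG) {r : ℝ} (hr : 0 < r) :
    ∫⁻ y in ball x r, ∫⁻ z in ball x r, edist (u y) (u z) ≤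
      volume (ball 0 (2 * r)) * (5 * (A * (ENNReal.ofReal (4 * r) *
        liminf (fun k => ∫⁻ y in ball x (12 * r), ρ k y) atTop))) := by
  have hm : Measurable fun z : HG × HG => edist (u (mul z.1 z.2)) (u z.1) :=
    ((hu.comp continuous_mul).edist (hu.comp continuous_fst)).measurable
  calc _ ≤ ∫⁻ y in ball x r, ∫⁻ v in ball 0 (2 * r), edist (u (mul y v)) (u y) := by
        refine setLIntegral_mono' (measurableSet_ball _ _) fun y hy => ?_
        have hy : d x y < r := hy
        rw [← lintegral_indicator (measurableSet_ball _ _),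
          ← lintegral_indicator (measurableSet_ball _ _),
          ← (measurePreserving_mul_left y).lintegral_comp
            (Measurable.indicator (by fun_prop) (measurableSet_ball _ _))]
        refine lintegral_mono fun v => ?_
        by_cases hv : mul y v ∈ ball x r
        · have : v ∈ ball 0 (2 * r) := by
            have h1 : d x (mul y v) < r := hv
            have h2 := d_triangle y x (mul y v)
            rw [d_self_mul, d_comm y x] at h2
            show d 0 v < _
            rw [d_zero_left]; linarith
          simp [hv, this, edist_comm]
        · simp [hv]
    _ = ∫⁻ v in ball 0 (2 * r), ∫⁻ y in ball x r, edist (u (mul y v)) (u y) :=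
        lintegral_lintegral_swap hm.aemeasurable
    _ ≤ ∫⁻ v in ball 0 (2 * r), (5 * (A * (ENNReal.ofReal (4 * r) *
        liminf (fun k => ∫⁻ y in ball x (12 * r), ρ k y) atTop))) := by
        refine setLIntegral_mono' (measurableSet_ball _ _) fun v hv => ?_
        have hv : d 0 v < 2 * r := hv
        rw [d_zero_left] at hv
        exact h.setLIntegral_mul_le hu hρ hA x hr hv
    _ = _ := by rw [setLIntegral_const, mul_comm]

lemma setLIntegral_le_energy {F : HG → ℝ≥0∞} (hF : Measurable F) (x : HG) {r : ℝ} (hr : 0 < r) :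
    ∫⁻ y in ball x r, F y ≤ ENNReal.ofReal r ^ 3 * unitVol ^ (3 / 4 : ℝ) *
      (∫⁻ y in ball x r, F y ^ 4) ^ (1 / 4 : ℝ) := by
  have hpq : (4 : ℝ).HolderConjugate (4 / 3) := by
    rw [Real.holderConjugate_iff]; norm_num
  have := ENNReal.lintegral_mul_le_Lp_mul_Lq (volume.restrict (ball x r)) hpq hF.aemeasurable
    (measurable_const (a := (1 : ℝ≥0∞))).aemeasurable
  simp only [Pi.mul_apply, mul_one, ENNReal.one_rpow, lintegral_const, one_mul,
    Measure.restrict_apply_univ, volume_ball x hr] at this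
  refine this.trans_eq ?_
  rw [mul_comm, ENNReal.mul_rpow_of_nonneg _ _ (by norm_num), ← ENNReal.rpow_natCast,
    ← ENNReal.rpow_mul, ← ENNReal.rpow_natCast]
  norm_num

/-- The uniform probability measure on a ball. -/
noncomputable def unif (x : HG) (r : ℝ) : Measure HG :=
  (volume (ball x r))⁻¹ • volume.restrict (ball x r)

lemma isProbabilityMeasure_unif (x : HG) {r : ℝ} (hr : 0 < r) :
    IsProbabilityMeasure (unif x r) := by
  constructor
  rw [unif, Measure.smul_apply, Measure.restrict_apply_univ, smul_eq_mul,
    ENNReal.inv_mul_cancel (volume_ball_ne_zero x hr) (volume_ball_ne_top x hr)]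

/-- Mean distance between the values of `u` at points chosen according to `P` and `Q`. -/
noncomputable def gap (u : HG → ℝ) (P Q : Measure HG) : ℝ≥0∞ :=
  ∫⁻ y, ∫⁻ z, edist (u y) (u z) ∂Q ∂P

lemma gap_triangle {u : HG → ℝ} (hu : Continuous u) (P Q W : Measure HG)
    [IsProbabilityMeasure P] [IsProbabilityMeasure Q] [IsProbabilityMeasure W] :
    gap u P W ≤ gap u P Q + gap u Q W := by
  have hm : Measurable fun z : HG × HG => edist (u z.1) (u z.2) :=
    ((hu.comp continuous_fst).edist (hu.comp continuous_snd)).measurable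
  have hQW : Measurable fun w => ∫⁻ z, edist (u w) (u z) ∂W := hm.lintegral_prod_right'
  calc gap u P W = ∫⁻ y, ∫⁻ _w, ∫⁻ z, edist (u y) (u z) ∂W ∂Q ∂P := by simp [gap]
    _ ≤ ∫⁻ y, ∫⁻ w, ∫⁻ z, (edist (u y) (u w) + edist (u w) (u z)) ∂W ∂Q ∂P := by
        gcongr with y w z
        exact edist_triangle _ _ _
    _ = ∫⁻ y, ((∫⁻ w, edist (u y) (u w) ∂Q) + gap u Q W) ∂P := by
        congr with y
        have : ∀ w, ∫⁻ z, (edist (u y) (u w) + edist (u w) (u z)) ∂W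
            = edist (u y) (u w) + ∫⁻ z, edist (u w) (u z) ∂W := fun w => by
          rw [lintegral_add_left measurable_const]; simp
        simp only [this]
        rw [lintegral_add_right _ hQW, gap]
    _ = _ := by
        rw [lintegral_add_right _ measurable_const]
        simp [gap]

/-- The constant in `LineBound.gap_unif_le`. -/
noncomputable def poincareConst : ℝ≥0∞ := 8847360 * (unitVol⁻¹ * unitVol ^ (3 / 4 : ℝ))

lemma poincareConst_ne_top : poincareConst ≠ ∞ := by
  refine ENNReal.mul_ne_top (by norm_num) (ENNReal.mul_ne_top ?_ ?_)
  · exact ENNReal.inv_ne_top.2 unitVol_ne_zero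
  · exact ENNReal.rpow_ne_top_of_nonneg (by norm_num) unitVol_ne_top

lemma LineBound.gap_unif_le {u : HG → ℝ} {ρ : ℕ → HG → ℝ≥0∞} {A : ℝ≥0∞}
    (h : LineBound u ρ A) (hu : Continuous u) (hρ : ∀ k, Measurable (ρ k)) (hA : A ≠ ∞)
    {x x' : HG} {r : ℝ} (hr : 0 < r) (hsub : ball x' (r / 2) ⊆ ball x r) :
    gap u (unif x' (r / 2)) (unif x r) ≤ poincareConst * A *
      liminf (fun k => (∫⁻ y in ball x (12 * r), ρ k y ^ 4) ^ (1 / 4 : ℝ)) atTop := by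
  set X := liminf (fun k => (∫⁻ y in ball x (12 * r), ρ k y ^ 4) ^ (1 / 4 : ℝ)) atTop with hX
  set q := ENNReal.ofReal r with hq
  have hq0 : q ≠ 0 := by simpa [hq] using hr
  have hqt : q ≠ ∞ := ENNReal.ofReal_ne_top
  set Z := q ^ 4 * unitVol with hZ
  have hZ0 : Z ≠ 0 := mul_ne_zero (pow_ne_zero _ hq0) unitVol_ne_zero
  have hZt : Z ≠ ∞ := ENNReal.mul_ne_top (ENNReal.pow_ne_top hqt) unitVol_ne_top
  have hvB : volume (ball x r) = Z := volume_ball x hr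
  have hvB' : volume (ball x' (r / 2)) = Z / 16 := by
    rw [volume_ball x' (half_pos hr), ENNReal.ofReal_div_of_pos (by norm_num), ENNReal.ofReal_ofNat,
      ENNReal.div_eq_inv_mul, mul_pow, ENNReal.div_eq_inv_mul, hZ, mul_assoc, ← ENNReal.inv_pow]
    norm_num [hq]
  have hv2 : volume (ball 0 (2 * r)) = 16 * Z := by
    rw [volume_ball 0 (by positivity), ENNReal.ofReal_mul (by norm_num), ENNReal.ofReal_ofNat,
      mul_pow, hZ, mul_assoc]
    norm_num [hq]
  have hlim : liminf (fun k => ∫⁻ y in ball x (12 * r), ρ k y) atTop ≤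
      1728 * q ^ 3 * unitVol ^ (3 / 4 : ℝ) * X := by
    rw [hX, ← ENNReal.liminf_const_mul_of_ne_top]
    · refine liminf_le_liminf (Eventually.of_forall fun k => ?_)
      refine (setLIntegral_le_energy (hρ k) x (by positivity)).trans_eq ?_
      rw [ENNReal.ofReal_mul (by norm_num), ENNReal.ofReal_ofNat, mul_pow]
      norm_num [hq]
    · exact ENNReal.mul_ne_top (ENNReal.mul_ne_top (by norm_num) (ENNReal.pow_ne_top hqt))
        (ENNReal.rpow_ne_top_of_nonneg (by norm_num) unitVol_ne_top)
  have hq4 : q ^ 4 = Z * unitVol⁻¹ := by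
    rw [hZ, mul_assoc, ENNReal.mul_inv_cancel unitVol_ne_zero unitVol_ne_top, mul_one]
  have h4 : ENNReal.ofReal (4 * r) = 4 * q := by
    rw [ENNReal.ofReal_mul (by norm_num), ENNReal.ofReal_ofNat]
  calc gap u (unif x' (r / 2)) (unif x r)
      = (Z / 16)⁻¹ * (Z⁻¹ * ∫⁻ y in ball x' (r / 2), ∫⁻ z in ball x r, edist (u y) (u z)) := by
        simp only [gap, unif, lintegral_smul_measure, smul_eq_mul, hvB, hvB']
        rw [lintegral_const_mul' _ _ (ENNReal.inv_ne_top.2 hZ0)]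
    _ ≤ (Z / 16)⁻¹ * (Z⁻¹ * ((16 * Z) * (5 * (A * ((4 * q) *
          (1728 * q ^ 3 * unitVol ^ (3 / 4 : ℝ) * X)))))) := by
        gcongr
        refine (lintegral_mono_set hsub).trans ?_
        refine (h.poincare hu hρ hA x hr).trans ?_
        rw [hv2, h4]
        gcongr
    _ = (16 * Z⁻¹) * (Z⁻¹ * ((16 * Z) * (5 * (A * ((4 * q) *
          (1728 * q ^ 3 * unitVol ^ (3 / 4 : ℝ) * X)))))) := by
        rw [ENNReal.inv_div (Or.inl (by norm_num)) (Or.inl (by norm_num)), ENNReal.div_eq_inv_mul,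
          mul_comm Z⁻¹]
    _ = (Z⁻¹ * Z) * Z⁻¹ * q ^ 4 * (8847360 * (A * (unitVol ^ (3 / 4 : ℝ) * X))) := by ring
    _ = (Z⁻¹ * Z) * (Z⁻¹ * Z) * (unitVol⁻¹ * (8847360 * (A * (unitVol ^ (3 / 4 : ℝ) * X)))) := by
        rw [hq4]; ring
    _ = _ := by
        rw [ENNReal.inv_mul_cancel hZ0 hZt, poincareConst]; ring

/-! ### Oscillation between two continua -/

lemma card_filter_abs_sub_lt_le (N : ℕ) (a : ℝ) {b : ℝ} (hb : 0 ≤ b) :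
    (((Finset.range N).filter fun i : ℕ => |(i : ℝ) - a| < b).card : ℝ) ≤ 2 * b + 1 := by
  have h1 : ((Finset.range N).filter fun i : ℕ => |(i : ℝ) - a| < b).card ≤
      (Finset.Icc ⌈a - b⌉ ⌊a + b⌋).card := by
    refine Finset.card_le_card_of_injOn (fun i : ℕ => (i : ℤ)) (fun i hi => ?_)
      (fun i _ j _ hij => Nat.cast_injective hij)
    have hi := (Finset.mem_filter.1 (Finset.mem_coe.1 hi)).2
    rw [abs_lt] at hi
    refine Finset.mem_coe.2 (Finset.mem_Icc.2 ⟨Int.ceil_le.2 ?_, Int.le_floor.2 ?_⟩)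
    · push_cast; linarith
    · push_cast; linarith
  have h2 : ((Finset.Icc ⌈a - b⌉ ⌊a + b⌋).card : ℝ) ≤ 2 * b + 1 := by
    rw [Int.card_Icc]
    have h3 := Int.floor_le (a + b)
    have h4 := Int.le_ceil (a - b)
    have h5 : (((⌊a + b⌋ + 1 - ⌈a - b⌉).toNat : ℤ) : ℝ) =
        ((max (⌊a + b⌋ + 1 - ⌈a - b⌉) 0 : ℤ) : ℝ) := by rw [Int.toNat_eq_max]
    rw [Int.cast_natCast] at h5
    rw [h5]
    push_cast
    exact max_le (by linarith) (by linarith)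
  exact le_trans (by exact_mod_cast h1) h2

lemma sum_measure_ball_le (μ : Measure HG) {N : ℕ} {x : ℕ → HG} {R s : ℝ}
    (hx : ∀ i < N, knorm (x i) = R + i / N) (hs : 1 ≤ s * N) :
    ∑ i ∈ Finset.range N, μ (ball (x i) s) ≤ ENNReal.ofReal (3 * s * N) * μ univ := by
  have hN : 0 < (N : ℝ) := by
    rcases Nat.eq_zero_or_pos N with h | h
    · rw [h] at hs; norm_num at hs
    · exact_mod_cast h
  calc ∑ i ∈ Finset.range N, μ (ball (x i) s)
      = ∫⁻ y, ∑ i ∈ Finset.range N, (ball (x i) s).indicator 1 y ∂μ := by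
        rw [lintegral_finsetSum _ fun i _ => measurable_one.indicator (measurableSet_ball _ _)]
        exact Finset.sum_congr rfl fun i _ =>
          (lintegral_indicator_one (measurableSet_ball _ _)).symm
    _ ≤ ∫⁻ _y, ENNReal.ofReal (3 * s * N) ∂μ := by
        refine lintegral_mono fun y => ?_
        have h1 : ∑ i ∈ Finset.range N, (ball (x i) s).indicator (1 : HG → ℝ≥0∞) y ≤
            ∑ i ∈ Finset.range N, if |(i : ℝ) - (knorm y - R) * N| < s * N then 1 else 0 := by
          refine Finset.sum_le_sum fun i hi => ?_
          by_cases hy : y ∈ ball (x i) s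
          · have h2 : d (x i) y < s := hy
            have h3 := (abs_knorm_sub_le (x i) y).trans_lt h2
            rw [hx i (Finset.mem_range.1 hi)] at h3
            have h4 : |(i : ℝ) - (knorm y - R) * N| < s * N := by
              rw [show (i : ℝ) - (knorm y - R) * N = (R + i / N - knorm y) * N by
                field_simp; ring, abs_mul, abs_of_pos hN]
              gcongr
            simp [hy, h4]
          · simp [hy]
        refine h1.trans ?_
        rw [Finset.sum_boole, ← ENNReal.ofReal_natCast]
        refine ENNReal.ofReal_le_ofReal ?_
        have := card_filter_abs_sub_lt_le N ((knorm y - R) * N) (b := s * N) (by linarith)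
        linarith
    _ = _ := lintegral_const _

lemma sum_rpow_quarter_le (N : ℕ) (a : ℕ → ℝ≥0∞) :
    ∑ i ∈ Finset.range N, a i ^ (1 / 4 : ℝ) ≤
      (N : ℝ≥0∞) ^ (3 / 4 : ℝ) * (∑ i ∈ Finset.range N, a i) ^ (1 / 4 : ℝ) := by
  have h := ENNReal.rpow_sum_le_const_mul_sum_rpow (Finset.range N)
    (fun i => a i ^ (1 / 4 : ℝ)) (p := 4) (by norm_num)
  simp only [← ENNReal.rpow_mul, Finset.card_range] at h
  norm_num at h
  have h2 := ENNReal.rpow_le_rpow h (z := 1 / 4) (by norm_num)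
  rw [ENNReal.mul_rpow_of_nonneg _ _ (by norm_num), ← ENNReal.rpow_natCast,
    ← ENNReal.rpow_natCast, ← ENNReal.rpow_mul, ← ENNReal.rpow_mul] at h2
  norm_num at h2 ⊢
  exact h2

lemma sum_liminf_le (N : ℕ) (a : ℕ → ℕ → ℝ≥0∞) :
    ∑ i ∈ Finset.range N, liminf (fun k => a i k) atTop ≤
      liminf (fun k => ∑ i ∈ Finset.range N, a i k) atTop := by
  have := lintegral_liminf_le (μ := Measure.count.restrict (Finset.range N : Set ℕ))
    (f := fun k i => a i k) (u := atTop) fun k => measurable_of_countable _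
  simpa only [lintegral_finset, Measure.count_singleton, mul_one] using this

/-- Factor coming from summing over dyadic scales in `LineBound.sum_gap_dirac_le`. -/
noncomputable def chainConst (T : ℝ) : ℝ≥0∞ :=
  1 + ENNReal.ofReal (36 * T) ^ (1 / 4 : ℝ) * (1 - (2⁻¹ : ℝ≥0∞) ^ (1 / 4 : ℝ))⁻¹

lemma chainConst_ne_top (T : ℝ) : chainConst T ≠ ∞ := by
  refine ENNReal.add_ne_top.2 ⟨by norm_num, ENNReal.mul_ne_top ?_ ?_⟩
  · exact ENNReal.rpow_ne_top_of_nonneg (by norm_num) ENNReal.ofReal_ne_top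
  · rw [Ne, ENNReal.inv_eq_top, tsub_eq_zero_iff_le, not_le]
    exact ENNReal.rpow_lt_one (by norm_num) (by norm_num)

lemma gap_dirac_le_chain {u : HG → ℝ} (hu : Continuous u) (x : HG) {T : ℝ} (hT : 0 < T) (J : ℕ) :
    gap u (Measure.dirac x) (unif x T) ≤ gap u (Measure.dirac x) (unif x (T / 2 ^ J)) +
      ∑ j ∈ Finset.range J, gap u (unif x (T / 2 ^ j / 2)) (unif x (T / 2 ^ j)) := by
  induction J with
  | zero => simp
  | succ J ih =>
    have := isProbabilityMeasure_unif x (r := T / 2 ^ J) (by positivity)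
    have := isProbabilityMeasure_unif x (r := T / 2 ^ J / 2) (by positivity)
    refine ih.trans ?_
    rw [Finset.sum_range_succ, add_comm (∑ j ∈ Finset.range J, _), ← add_assoc]
    gcongr
    rw [show T / 2 ^ (J + 1) = T / 2 ^ J / 2 by rw [pow_succ]; field_simp]
    exact gap_triangle hu _ _ _

lemma LineBound.sum_gap_dirac_le {u : HG → ℝ} {ρ : ℕ → HG → ℝ≥0∞} {A V : ℝ≥0∞}
    (h : LineBound u ρ A) (hu : Continuous u) (hρ : ∀ k, Measurable (ρ k)) (hA : A ≠ ∞)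
    (hV : ∀ k, ∫⁻ y, ρ k y ^ 4 ≤ V) {R T : ℝ} (hR : 0 ≤ R) (hT : R + 1 ≤ T) {J N : ℕ}
    (hJ : ∀ x y : HG, knorm x ≤ T → d x y < T / 2 ^ J → edist (u x) (u y) ≤ 1)
    (hN : 2 ^ J ≤ N) {x : ℕ → HG} (hx : ∀ i < N, knorm (x i) = R + i / N) :
    ∑ i ∈ Finset.range N, gap u (Measure.dirac (x i)) (unif 0 (2 * T)) ≤
      N * (1 + poincareConst * A * (chainConst T * V ^ (1 / 4 : ℝ))) := by
  have hT0 : 0 < T := by linarith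
  have hN0 : 0 < N := lt_of_lt_of_le (by positivity) hN
  have hNr : (0 : ℝ) < N := by exact_mod_cast hN0
  have hxT : ∀ i < N, knorm (x i) ≤ T := fun i hi => by
    rw [hx i hi]
    have : (i : ℝ) / N ≤ 1 := (div_le_one hNr).2 (by exact_mod_cast hi.le)
    linarith
  set c := poincareConst * A with hc
  set b : ℝ≥0∞ := (2⁻¹ : ℝ≥0∞) ^ (1 / 4 : ℝ) with hb
  have scale : ∀ j < J, ∑ i ∈ Finset.range N,
      gap u (unif (x i) (T / 2 ^ j / 2)) (unif (x i) (T / 2 ^ j)) ≤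
      N * (c * (ENNReal.ofReal (36 * T) ^ (1 / 4 : ℝ) * b ^ j * V ^ (1 / 4 : ℝ))) := by
    intro j hj
    have hTj : 0 < T / 2 ^ j := by positivity
    have hs : 1 ≤ 12 * (T / 2 ^ j) * N := by
      have h1 : (2 : ℝ) ^ j ≤ N := le_trans (by gcongr; norm_num)
        (show (2 : ℝ) ^ J ≤ N by exact_mod_cast hN)
      have h2 : 1 ≤ (N : ℝ) / 2 ^ j := (one_le_div (by positivity)).2 h1
      have h3 : 12 * (T / 2 ^ j) * N = 12 * T * (N / 2 ^ j) := by ring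
      rw [h3]
      nlinarith
    calc _ ≤ ∑ i ∈ Finset.range N, c * liminf (fun k =>
            (∫⁻ y in ball (x i) (12 * (T / 2 ^ j)), ρ k y ^ 4) ^ (1 / 4 : ℝ)) atTop := by
          refine Finset.sum_le_sum fun i _ => h.gap_unif_le hu hρ hA hTj ?_
          refine ball_subset_ball ?_
          rw [d_self]; linarith
      _ ≤ c * liminf (fun k => ∑ i ∈ Finset.range N,
            (∫⁻ y in ball (x i) (12 * (T / 2 ^ j)), ρ k y ^ 4) ^ (1 / 4 : ℝ)) atTop := by
          rw [← Finset.mul_sum]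
          gcongr
          exact sum_liminf_le N fun i k =>
            (∫⁻ y in ball (x i) (12 * (T / 2 ^ j)), ρ k y ^ 4) ^ (1 / 4 : ℝ)
      _ ≤ c * (N * (ENNReal.ofReal (36 * T) ^ (1 / 4 : ℝ) * b ^ j * V ^ (1 / 4 : ℝ))) := by
          gcongr
          refine liminf_le_of_frequently_le' (Frequently.of_forall fun k => ?_)
          refine (sum_rpow_quarter_le N _).trans ?_
          have h1 := sum_measure_ball_le (volume.withDensity fun y => ρ k y ^ 4) hx hs
          simp only [withDensity_apply _ (measurableSet_ball _ _)] at h1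
          rw [withDensity_apply _ MeasurableSet.univ, Measure.restrict_univ] at h1
          have h2 : ENNReal.ofReal (3 * (12 * (T / 2 ^ j)) * N) =
              ENNReal.ofReal (36 * T) * 2⁻¹ ^ j * N := by
            rw [show 3 * (12 * (T / 2 ^ j)) * (N : ℝ) = 36 * T * (2⁻¹) ^ j * N by
              rw [inv_pow]; ring, ENNReal.ofReal_mul (by positivity),
              ENNReal.ofReal_mul (by positivity), ENNReal.ofReal_pow (by positivity),
              ENNReal.ofReal_natCast, ENNReal.ofReal_inv_of_pos (by norm_num),
              ENNReal.ofReal_ofNat]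
          have h3 := ENNReal.rpow_le_rpow (h1.trans (mul_le_mul_right (hV k) _))
            (z := 1 / 4) (by norm_num)
          rw [h2, ENNReal.mul_rpow_of_nonneg _ _ (by norm_num),
            ENNReal.mul_rpow_of_nonneg _ _ (by norm_num),
            ENNReal.mul_rpow_of_nonneg _ _ (by norm_num)] at h3
          have h4 : ((2⁻¹ : ℝ≥0∞) ^ j) ^ (1 / 4 : ℝ) = b ^ j := by
            rw [hb, ← ENNReal.rpow_natCast, ← ENNReal.rpow_natCast, ← ENNReal.rpow_mul,
              ← ENNReal.rpow_mul, mul_comm]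
          have h5 : (N : ℝ≥0∞) ^ (3 / 4 : ℝ) * (N : ℝ≥0∞) ^ (1 / 4 : ℝ) = N := by
            rw [← ENNReal.rpow_add _ _ (by exact_mod_cast hN0.ne') (ENNReal.natCast_ne_top N)]
            norm_num
          rw [h4] at h3
          calc _ ≤ _ := mul_le_mul_right h3 _
            _ = ((N : ℝ≥0∞) ^ (3 / 4 : ℝ) * (N : ℝ≥0∞) ^ (1 / 4 : ℝ)) *
                (ENNReal.ofReal (36 * T) ^ (1 / 4 : ℝ) * b ^ j * V ^ (1 / 4 : ℝ)) := by ring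
            _ = _ := by rw [h5]
      _ = _ := by ring
  calc _ ≤ ∑ i ∈ Finset.range N, (1 + ∑ j ∈ Finset.range J,
        gap u (unif (x i) (T / 2 ^ j / 2)) (unif (x i) (T / 2 ^ j)) + c * V ^ (1 / 4 : ℝ)) := by
        refine Finset.sum_le_sum fun i hi => ?_
        have hi := Finset.mem_range.1 hi
        have := isProbabilityMeasure_unif (x i) (r := T) hT0
        have := isProbabilityMeasure_unif (0 : HG) (r := 2 * T) (by positivity)
        refine (gap_triangle hu _ (unif (x i) T) _).trans (add_le_add
          ((gap_dirac_le_chain hu (x i) hT0 J).trans (add_le_add_left ?_ _)) ?_)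
        · have := isProbabilityMeasure_unif (x i) (r := T / 2 ^ J) (by positivity)
          rw [gap, lintegral_dirac]
          calc _ ≤ ∫⁻ _z, 1 ∂(unif (x i) (T / 2 ^ J)) := by
                refine lintegral_mono_ae ?_
                refine Measure.ae_smul_measure ?_ _
                filter_upwards [ae_restrict_mem (measurableSet_ball _ _)] with z hz
                exact hJ _ _ (hxT i hi) hz
            _ = 1 := by simp
        · have h1 := h.gap_unif_le hu hρ hA (x := 0) (x' := x i) (r := 2 * T) (by positivity)
            (ball_subset_ball (by rw [d_zero_left]; linarith [hxT i hi]))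
          rw [show 2 * T / 2 = T by ring] at h1
          refine h1.trans ?_
          gcongr
          refine liminf_le_of_frequently_le' (Frequently.of_forall fun k => ?_)
          gcongr
          exact (setLIntegral_le_lintegral _ _).trans (hV k)
    _ = N * 1 + (∑ j ∈ Finset.range J, ∑ i ∈ Finset.range N,
        gap u (unif (x i) (T / 2 ^ j / 2)) (unif (x i) (T / 2 ^ j))) +
          N * (c * V ^ (1 / 4 : ℝ)) := by
        rw [Finset.sum_add_distrib, Finset.sum_add_distrib, Finset.sum_comm]
        simp
    _ ≤ N * 1 + (∑ j ∈ Finset.range J,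
        N * (c * (ENNReal.ofReal (36 * T) ^ (1 / 4 : ℝ) * b ^ j * V ^ (1 / 4 : ℝ)))) +
          N * (c * V ^ (1 / 4 : ℝ)) := by
        gcongr with j hj
        exact scale j (Finset.mem_range.1 hj)
    _ = N * 1 + (∑ j ∈ Finset.range J, b ^ j) *
        (N * (c * (ENNReal.ofReal (36 * T) ^ (1 / 4 : ℝ) * V ^ (1 / 4 : ℝ)))) +
          N * (c * V ^ (1 / 4 : ℝ)) := by
        rw [Finset.sum_mul]
        congr 2
        refine Finset.sum_congr rfl fun j _ => ?_
        ring
    _ ≤ N * 1 + (1 - b)⁻¹ *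
        (N * (c * (ENNReal.ofReal (36 * T) ^ (1 / 4 : ℝ) * V ^ (1 / 4 : ℝ)))) +
          N * (c * V ^ (1 / 4 : ℝ)) := by
        gcongr
        rw [← ENNReal.tsum_geometric]
        exact ENNReal.sum_le_tsum _
    _ = _ := by
        rw [chainConst]
        ring

lemma exists_uniform_scale {u : HG → ℝ} (hu : Continuous u) (T : ℝ) :
    ∃ J : ℕ, ∀ x y : HG, knorm x ≤ T → d x y < T / 2 ^ J → edist (u x) (u y) ≤ 1 := by
  have hopen : IsOpen {z : HG × HG | edist (u z.1) (u (mul z.1 z.2)) < 1} :=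
    isOpen_Iio.preimage ((hu.comp continuous_fst).edist (hu.comp continuous_mul))
  obtain ⟨U, W, -, hW, hU, h0, hUW⟩ := generalized_tube_lemma (isCompact_knorm_le T)
    (isCompact_singleton (x := (0 : HG))) hopen (by
      rintro ⟨x, y⟩ ⟨-, hy⟩
      have hy : y = 0 := hy
      simp [hy, mul_zero'])
  obtain ⟨ε, hε, h⟩ := exists_knorm_lt_subset (hW.mem_nhds (h0 rfl))
  have hlim : Tendsto (fun J : ℕ => T / 2 ^ J) atTop (𝓝 0) := by
    have := (tendsto_pow_atTop_nhds_zero_of_lt_one (r := (2⁻¹ : ℝ)) (by norm_num)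
      (by norm_num)).const_mul T
    simpa [div_eq_mul_inv] using this
  obtain ⟨J, hJ⟩ := (hlim.eventually (gt_mem_nhds hε)).exists
  refine ⟨J, fun x y hx hxy => ?_⟩
  have hy : mul x (mul (inv x) y) = y := mul_inv_cancel_left' x y
  have hk : knorm (mul (inv x) y) < ε := by
    have := d_comm y x
    rw [d] at this
    rw [this]; linarith
  have := hUW (Set.mk_mem_prod (hU hx) (h _ hk))
  have : edist (u x) (u (mul x (mul (inv x) y))) < 1 := this
  rw [hy] at this
  exact this.le

/-- If `u` takes the value `α` on a set meeting all spheres of radii in `[0,1]` and the value `β` on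
a set meeting all spheres of radii in `[R,R+1]`, then `|α - β|` is controlled by the energy. -/
theorem LineBound.edist_le {u : HG → ℝ} {ρ : ℕ → HG → ℝ≥0∞} {A V : ℝ≥0∞}
    (h : LineBound u ρ A) (hu : Continuous u) (hρ : ∀ k, Measurable (ρ k)) (hA : A ≠ ∞)
    (hV : ∀ k, ∫⁻ y, ρ k y ^ 4 ≤ V) {R : ℝ} (hR : 0 ≤ R) {α β : ℝ}
    (hE : ∀ τ ∈ Icc (0 : ℝ) 1, ∃ x, knorm x = τ ∧ u x = α)
    (hF : ∀ τ ∈ Icc (0 : ℝ) 1, ∃ x, knorm x = R + τ ∧ u x = β) :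
    edist α β ≤ 2 * (1 + poincareConst * A * (chainConst (R + 1) * V ^ (1 / 4 : ℝ))) := by
  set T := R + 1 with hT
  obtain ⟨J, hJ⟩ := exists_uniform_scale hu T
  set N : ℕ := 2 ^ J with hN
  have hN0 : 0 < N := by positivity
  have hτ : ∀ i < N, (i : ℝ) / N ∈ Icc (0 : ℝ) 1 := fun i hi =>
    ⟨by positivity, (div_le_one (by exact_mod_cast hN0)).2 (by exact_mod_cast hi.le)⟩
  have hE' : ∀ i : ℕ, ∃ x, i < N → knorm x = 0 + (i : ℝ) / N ∧ u x = α := fun i => by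
    by_cases hi : i < N
    · obtain ⟨x, hx⟩ := hE _ (hτ i hi)
      exact ⟨x, fun _ => by rwa [zero_add]⟩
    · exact ⟨0, fun h => absurd h hi⟩
  have hF' : ∀ i : ℕ, ∃ x, i < N → knorm x = R + (i : ℝ) / N ∧ u x = β := fun i => by
    by_cases hi : i < N
    · obtain ⟨x, hx⟩ := hF _ (hτ i hi)
      exact ⟨x, fun _ => hx⟩
    · exact ⟨0, fun h => absurd h hi⟩
  choose x hx using hE'
  choose y hy using hF'
  have h1 := h.sum_gap_dirac_le hu hρ hA hV le_rfl (by linarith : (0 : ℝ) + 1 ≤ T) hJ hN.ge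
    (fun i hi => (hx i hi).1)
  have h2 := h.sum_gap_dirac_le hu hρ hA hV hR (le_refl T) hJ hN.ge (fun i hi => (hy i hi).1)
  have h3 : (N : ℝ≥0∞) * edist α β ≤
      ∑ i ∈ Finset.range N, gap u (Measure.dirac (x i)) (unif 0 (2 * T)) +
      ∑ i ∈ Finset.range N, gap u (Measure.dirac (y i)) (unif 0 (2 * T)) := by
    rw [← Finset.sum_add_distrib]
    calc (N : ℝ≥0∞) * edist α β = ∑ i ∈ Finset.range N, edist α β := by simp
      _ ≤ _ := by
        refine Finset.sum_le_sum fun i hi => ?_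
        have hi := Finset.mem_range.1 hi
        have := isProbabilityMeasure_unif (0 : HG) (r := 2 * T) (by positivity)
        have h4 := gap_triangle hu (Measure.dirac (x i)) (unif 0 (2 * T)) (Measure.dirac (y i))
        have h5 : gap u (unif 0 (2 * T)) (Measure.dirac (y i)) =
            gap u (Measure.dirac (y i)) (unif 0 (2 * T)) := by
          simp only [gap, lintegral_dirac, edist_comm]
        rw [h5] at h4
        simpa only [gap, lintegral_dirac, (hx i hi).2, (hy i hi).2] using h4
  have hNe : (N : ℝ≥0∞) ≠ 0 := by exact_mod_cast hN0.ne'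
  rw [← ENNReal.mul_le_mul_iff_right hNe (ENNReal.natCast_ne_top N)]
  calc _ ≤ _ := h3.trans (add_le_add h1 h2)
    _ = _ := by ring

/-! ### Functions of one variable covered by discrete gradients -/

lemma setLIntegral_real_le_energy {P : ℝ → ℝ≥0∞} (hP : Measurable P) {V W : Set ℝ} (hVW : V ⊆ W) :
    ∫⁻ s in V, P s ≤ (∫⁻ s in W, P s ^ 4) ^ (1 / 4 : ℝ) * volume V ^ (3 / 4 : ℝ) := by
  have hpq : (4 : ℝ).HolderConjugate (4 / 3) := by
    rw [Real.holderConjugate_iff]; norm_num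
  have := ENNReal.lintegral_mul_le_Lp_mul_Lq (volume.restrict V) hpq hP.aemeasurable
    (measurable_const (a := (1 : ℝ≥0∞))).aemeasurable
  simp only [Pi.mul_apply, mul_one, ENNReal.one_rpow, lintegral_const, one_mul,
    Measure.restrict_apply_univ] at this
  norm_num at this ⊢
  refine this.trans ?_
  gcongr

lemma volume_image_null {w : ℝ → ℝ} {P : ℕ → ℝ → ℝ≥0∞} {G : ℕ → Set ℝ} {C : ℝ≥0∞} {a b : ℝ}
    (hP : ∀ k, Measurable (P k)) (hG : Monotone G) (hGu : ⋃ k, G k = univ) (hC : C ≠ ∞)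
    (hcov : ∀ k, ∀ s ⊆ G k, volume (w '' s) ≤
      C * ∫⁻ t in Metric.thickening (2 / ((k : ℝ) + 1)) s, P k t)
    (hfin : liminf (fun k => ∫⁻ t in Ioo a b, P k t ^ 4) atTop < ∞)
    {N : Set ℝ} (hNab : N ⊆ Ioo a b) (hN : volume N = 0) : volume (w '' N) = 0 := by
  obtain ⟨B, hB1, hB2⟩ := exists_between hfin
  have hfreq : ∃ᶠ k in atTop, ∫⁻ t in Ioo a b, P k t ^ 4 < B :=
    frequently_lt_of_liminf_lt (by isBoundedDefault) hB1
  have key : ∀ ε : ℝ≥0∞, 0 < ε → volume (w '' N) ≤ C * (B ^ (1 / 4 : ℝ) * ε ^ (3 / 4 : ℝ)) := by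
    intro ε hε
    obtain ⟨V', hNV', hV'o, hV'⟩ := N.exists_isOpen_lt_of_lt ε (by rwa [hN])
    set V := V' ∩ Ioo a b with hVdef
    have hVo : IsOpen V := hV'o.inter isOpen_Ioo
    have hVε : volume V ≤ ε := (measure_mono inter_subset_left).trans hV'.le
    let Y : ℕ → Set ℝ := fun j => {s | Metric.ball s (2 / ((j : ℝ) + 1)) ⊆ V} ∩ G j
    have hYm : Monotone Y := by
      intro i j hij s hs
      refine ⟨(Metric.ball_subset_ball ?_).trans hs.1, hG hij hs.2⟩
      gcongr
    have hYV : V ⊆ ⋃ j, Y j := by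
      intro s hs
      obtain ⟨ε, hε, hsub⟩ := Metric.isOpen_iff.1 hVo s hs
      obtain ⟨i, hi⟩ := exists_nat_one_div_lt (half_pos hε)
      obtain ⟨j, hj⟩ := mem_iUnion.1 (hGu ▸ mem_univ s)
      refine mem_iUnion.2 ⟨max i j, (Metric.ball_subset_ball ?_).trans hsub,
        hG (le_max_right i j) hj⟩
      have h1 : 2 / (((max i j : ℕ) : ℝ) + 1) ≤ 2 / ((i : ℝ) + 1) := by
        gcongr
        exact le_max_left i j
      have h2 : 2 / ((i : ℝ) + 1) = 2 * (1 / ((i : ℝ) + 1)) := by ring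
      linarith
    have hY : ∀ j, volume (w '' Y j) ≤ C * (B ^ (1 / 4 : ℝ) * ε ^ (3 / 4 : ℝ)) := by
      intro j
      obtain ⟨k, hkB, hjk⟩ := (hfreq.and_eventually (eventually_ge_atTop j)).exists
      have hth : Metric.thickening (2 / ((k : ℝ) + 1)) (Y k) ⊆ V := by
        intro t ht
        obtain ⟨s, hs, hst⟩ := Metric.mem_thickening_iff.1 ht
        exact hs.1 hst
      calc volume (w '' Y j) ≤ volume (w '' Y k) := measure_mono (image_mono (hYm hjk))
        _ ≤ C * ∫⁻ t in Metric.thickening (2 / ((k : ℝ) + 1)) (Y k), P k t :=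
            hcov k _ inter_subset_right
        _ ≤ C * ∫⁻ t in V, P k t := by
            gcongr
        _ ≤ C * (B ^ (1 / 4 : ℝ) * ε ^ (3 / 4 : ℝ)) := by
            gcongr
            refine (setLIntegral_real_le_energy (hP k)
              (inter_subset_right : V ⊆ Ioo a b)).trans ?_
            gcongr
    calc volume (w '' N) ≤ volume (⋃ j, w '' Y j) := by
          rw [← image_iUnion]
          exact measure_mono (image_mono ((subset_inter hNV' hNab).trans hYV))
      _ = ⨆ j, volume (w '' Y j) :=
          (show Monotone fun j => w '' Y j from fun i j hij => image_mono (hYm hij)).measure_iUnion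
      _ ≤ _ := iSup_le hY
  have hlim : Tendsto (fun ε : ℝ≥0∞ => C * (B ^ (1 / 4 : ℝ) * ε ^ (3 / 4 : ℝ))) (𝓝[>] 0) (𝓝 0) := by
    have h1 : Tendsto (fun ε : ℝ≥0∞ => ε ^ (3 / 4 : ℝ)) (𝓝 0) (𝓝 0) := by
      have := (ENNReal.continuous_rpow_const (y := 3 / 4)).tendsto 0
      rwa [ENNReal.zero_rpow_of_pos (by norm_num)] at this
    have hBt : B ^ (1 / 4 : ℝ) ≠ ∞ := ENNReal.rpow_ne_top_of_nonneg (by norm_num) hB2.ne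
    have h2 := ENNReal.Tendsto.const_mul (a := C)
      (ENNReal.Tendsto.const_mul (a := B ^ (1 / 4 : ℝ)) h1 (Or.inr hBt)) (Or.inr hC)
    simp only [mul_zero] at h2
    exact h2.mono_left nhdsWithin_le_nhds
  refine le_antisymm (ge_of_tendsto hlim ?_) zero_le
  filter_upwards [self_mem_nhdsWithin] with ε hε using key ε hε

lemma edist_le_liminf_of_cover {w : ℝ → ℝ} (hw : Continuous w) {P : ℕ → ℝ → ℝ≥0∞}
    {G : ℕ → Set ℝ} {C : ℝ≥0∞} {S : ℝ} (hS : 0 ≤ S) (hG : Monotone G) (hC : C ≠ ∞)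
    (hcov : ∀ k, ∀ s ⊆ G k, volume (w '' s) ≤
      C * ∫⁻ t in Metric.thickening (2 / ((k : ℝ) + 1)) s, P k t)
    (hnull : volume (w '' (Icc 0 S \ ⋃ k, G k)) = 0) :
    edist (w S) (w 0) ≤ C * liminf (fun k : ℕ =>
      ∫⁻ t in Icc (-(2 / ((k : ℝ) + 1))) (S + 2 / ((k : ℝ) + 1)), P k t) atTop := by
  have hm : Monotone fun j => w '' (Icc 0 S ∩ G j) := fun i j hij =>
    image_mono (inter_subset_inter_right _ (hG hij))
  calc edist (w S) (w 0) = volume (uIcc (w 0) (w S)) := by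
        rw [Real.volume_interval, edist_dist, Real.dist_eq]
    _ ≤ volume (w '' Icc 0 S) := by
        refine measure_mono ?_
        have := intermediate_value_uIcc (hw.continuousOn (s := uIcc 0 S))
        rwa [uIcc_of_le hS] at this
    _ ≤ volume (w '' (Icc 0 S \ ⋃ k, G k) ∪ ⋃ j, w '' (Icc 0 S ∩ G j)) := by
        refine measure_mono ?_
        rw [← image_iUnion, ← inter_iUnion, ← image_union, sdiff_union_inter]
    _ ≤ 0 + ⨆ j, volume (w '' (Icc 0 S ∩ G j)) := by
        refine (measure_union_le _ _).trans ?_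
        rw [hnull, hm.measure_iUnion]
    _ ≤ _ := by
        rw [zero_add, ← ENNReal.liminf_const_mul_of_ne_top hC]
        refine iSup_le fun j => le_liminf_of_le (by isBoundedDefault) ?_
        filter_upwards [eventually_ge_atTop j] with k hk
        refine (measure_mono (hm hk)).trans ((hcov k _ inter_subset_right).trans ?_)
        gcongr
        intro t ht
        obtain ⟨s, hs, hst⟩ := Metric.mem_thickening_iff.1 ht
        rw [Real.dist_eq, abs_lt] at hst
        constructor
        · linarith [hs.1.1]
        · linarith [hs.1.2]

/-! ### The logarithmic test function and its pulled back energy density -/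

/-- The truncated logarithm. -/
noncomputable def truncLog (n : ℕ) (s : ℝ) : ℝ := Real.log (min (max 1 s) (2 ^ n))

lemma continuous_truncLog (n : ℕ) : Continuous (truncLog n) := by
  refine Continuous.log (by fun_prop) fun s => ?_
  have : (0 : ℝ) < min (max 1 s) (2 ^ n) := by positivity
  exact this.ne'

lemma abs_log_sub_log_le {x y m : ℝ} (hm : 0 < m) (hx : m ≤ x) (hy : m ≤ y) :
    |Real.log x - Real.log y| ≤ |x - y| / m := by
  have key : ∀ {x y : ℝ}, m ≤ x → m ≤ y → Real.log x - Real.log y ≤ |x - y| / m := by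
    intro x y hx hy
    have hx0 : 0 < x := hm.trans_le hx
    have hy0 : 0 < y := hm.trans_le hy
    rw [← Real.log_div hx0.ne' hy0.ne']
    refine (Real.log_le_sub_one_of_pos (div_pos hx0 hy0)).trans ?_
    rw [div_sub_one hy0.ne']
    calc (x - y) / y ≤ |x - y| / y := by gcongr; exact le_abs_self _
      _ ≤ |x - y| / m := by gcongr
  rw [abs_sub_le_iff]
  exact ⟨key hx hy, by rw [abs_sub_comm]; exact key hy hx⟩

lemma truncLog_eq_of_far {n : ℕ} {s t : ℝ} (h : |s - t| ≤ 1 / 2) (ht : 2 ^ n + 1 / 2 ≤ t) :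
    truncLog n s = truncLog n t := by
  rw [abs_le] at h
  have h1 : (1 : ℝ) ≤ 2 ^ n := one_le_pow₀ (by norm_num)
  rw [truncLog, truncLog, min_eq_right, min_eq_right]
  · exact le_max_of_le_right (by linarith)
  · exact le_max_of_le_right (by linarith)

lemma abs_truncLog_sub_le {n : ℕ} {s t : ℝ} (h : |s - t| ≤ 1 / 2) (ht : t < 2 ^ n + 1 / 2) :
    |truncLog n s - truncLog n t| ≤ 2 * |s - t| / max 1 t := by
  have h1 : (1 : ℝ) ≤ 2 ^ n := one_le_pow₀ (by norm_num)
  have ha : (1 : ℝ) ≤ max 1 t := le_max_left _ _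
  have hlip : |min (max 1 s) (2 ^ n) - min (max 1 t) (2 ^ n)| ≤ |s - t| := by
    refine (abs_min_sub_min_le_max _ _ _ _).trans ?_
    rw [sub_self, abs_zero, max_eq_left (abs_nonneg _)]
    refine (abs_max_sub_max_le_max _ _ _ _).trans ?_
    rw [sub_self, abs_zero, max_eq_right (abs_nonneg _)]
  have hts : max 1 t ≤ max 1 s + 1 / 2 := by
    rw [abs_le] at h
    refine max_le ?_ ?_
    · linarith [le_max_left 1 s]
    · linarith [le_max_right 1 s]
  have hL : max 1 t ≤ 2 * 2 ^ n := max_le (by linarith) (by linarith)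
  have hx : max 1 t / 2 ≤ min (max 1 s) (2 ^ n) := le_min (by linarith) (by linarith)
  have hy : max 1 t / 2 ≤ min (max 1 t) (2 ^ n) := le_min (by linarith) (by linarith)
  refine (abs_log_sub_log_le (by positivity) hx hy).trans ?_
  rw [div_div_eq_mul_div, mul_comm]
  gcongr

/-- A density comparable with `max(1,‖q‖)⁻⁴` for `‖q‖ < 2 ^ (n + 2)`. -/
noncomputable def logDensity (n : ℕ) (q : HG) : ℝ≥0∞ :=
  ∑ j ∈ Finset.range (n + 3), (ball 0 (2 ^ j)).indicator (fun _ => 16 * (2⁻¹ ^ j) ^ 4) q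

lemma lintegral_logDensity (n : ℕ) :
    ∫⁻ q, logDensity n q = ((n + 3 : ℕ) : ℝ≥0∞) * (16 * unitVol) := by
  unfold logDensity
  rw [lintegral_finsetSum _ fun _ _ => measurable_const.indicator (measurableSet_ball _ _)]
  have : ∀ j ∈ Finset.range (n + 3), ∫⁻ q, (ball 0 (2 ^ j)).indicator
      (fun _ : HG => 16 * ((2⁻¹ : ℝ≥0∞) ^ j) ^ 4) q = 16 * unitVol := by
    intro j _
    rw [lintegral_indicator_const (measurableSet_ball _ _), volume_ball 0 (by positivity),
      ENNReal.ofReal_pow (by norm_num), ENNReal.ofReal_ofNat]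
    calc _ = 16 * ((2⁻¹ * 2 : ℝ≥0∞) ^ j) ^ 4 * unitVol := by rw [mul_pow]; ring
      _ = _ := by rw [ENNReal.inv_mul_cancel (by norm_num) (by norm_num)]; simp
  rw [Finset.sum_congr rfl this, Finset.sum_const, Finset.card_range, nsmul_eq_mul]

lemma le_logDensity {n : ℕ} {q : HG} {b : ℝ} (hq : knorm q < 2 ^ (n + 2)) (hb : 1 ≤ b)
    (hqb : knorm q ≤ b) : ENNReal.ofReal b⁻¹ ^ 4 ≤ logDensity n q := by
  have hex : ∃ j : ℕ, knorm q < 2 ^ j := ⟨_, hq⟩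
  classical
  set j := Nat.find hex with hj
  have hjq : knorm q < 2 ^ j := Nat.find_spec hex
  have hjn : j ≤ n + 2 := Nat.find_min' hex hq
  have hjb : (2 : ℝ) ^ j ≤ 2 * b := by
    rcases Nat.eq_zero_or_pos j with h0 | h0
    · rw [h0]; linarith
    · have h1 := Nat.find_min hex (m := j - 1) (by omega)
      rw [not_lt] at h1
      have h2 : (2 : ℝ) ^ j = 2 * 2 ^ (j - 1) := by
        rw [← pow_succ', Nat.sub_add_cancel h0]
      linarith
  have h3 : ENNReal.ofReal b⁻¹ ^ 4 ≤ 16 * (2⁻¹ ^ j) ^ 4 := by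
    have h4 : b⁻¹ ≤ 2 * (2⁻¹) ^ j := by
      rw [inv_pow, inv_le_comm₀ (by linarith) (by positivity), mul_inv, inv_inv]
      linarith
    calc ENNReal.ofReal b⁻¹ ^ 4 ≤ ENNReal.ofReal (2 * (2⁻¹) ^ j) ^ 4 := by gcongr
      _ = _ := by
        rw [ENNReal.ofReal_mul (by norm_num), ENNReal.ofReal_pow (by norm_num),
          ENNReal.ofReal_inv_of_pos (by norm_num), ENNReal.ofReal_ofNat, mul_pow]
        norm_num
  refine h3.trans ?_
  have hmem : q ∈ ball 0 (2 ^ j) := by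
    show d 0 q < 2 ^ j
    rwa [d_zero_left]
  calc _ = (ball 0 (2 ^ j)).indicator (fun _ : HG => 16 * ((2⁻¹ : ℝ≥0∞) ^ j) ^ 4) q := by
        rw [indicator_of_mem hmem]
    _ ≤ _ := Finset.single_le_sum
        (f := fun j => (ball 0 (2 ^ j)).indicator (fun _ : HG => 16 * ((2⁻¹ : ℝ≥0∞) ^ j) ^ 4) q)
        (fun _ _ => zero_le) (Finset.mem_range.2 (by omega))

/-- The test function attached to `f`. -/
noncomputable def logTest (f : HG → HG) (n : ℕ) (p : HG) : ℝ := truncLog n (knorm (f p))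

lemma continuous_logTest {f : HG → HG} (hf : Continuous f) (n : ℕ) : Continuous (logTest f n) :=
  (continuous_truncLog n).comp (continuous_knorm.comp hf)

/-- The logarithmic energy measure pulled back by a homeomorphism. -/
noncomputable def pullEnergy (F : HG ≃ₜ HG) (n : ℕ) : Measure HG :=
  (volume.withDensity (logDensity n)).map F.symm

lemma pullEnergy_univ (F : HG ≃ₜ HG) (n : ℕ) :
    pullEnergy F n univ = ((n + 3 : ℕ) : ℝ≥0∞) * (16 * unitVol) := by
  rw [pullEnergy, Measure.map_apply F.symm.continuous.measurable MeasurableSet.univ, preimage_univ,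
    withDensity_apply _ MeasurableSet.univ, Measure.restrict_univ, lintegral_logDensity]

lemma isFiniteMeasure_pullEnergy (F : HG ≃ₜ HG) (n : ℕ) : IsFiniteMeasure (pullEnergy F n) :=
  ⟨by
    rw [pullEnergy_univ]
    exact ENNReal.mul_lt_top (ENNReal.natCast_lt_top _)
      (ENNReal.mul_lt_top (by norm_num) unitVol_ne_top.lt_top)⟩

/-- Discrete gradient of the test function at scale `2 / (k + 1)`. -/
noncomputable def discGrad (F : HG ≃ₜ HG) (n k : ℕ) (y : HG) : ℝ≥0∞ :=
  ((k + 1 : ℕ) : ℝ≥0∞) * pullEnergy F n (ball y (2 / ((k : ℝ) + 1))) ^ (1 / 4 : ℝ)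

lemma measurableSet_d_lt (s : ℝ) : MeasurableSet {z : HG × HG | d z.1 z.2 < s} := by
  have := (isOpen_Iio (a := s)).preimage continuous_d
  exact this.measurableSet

lemma measurable_discGrad (F : HG ≃ₜ HG) (n k : ℕ) : Measurable (discGrad F n k) := by
  have := isFiniteMeasure_pullEnergy F n
  have h : Measurable fun y => pullEnergy F n (ball y (2 / ((k : ℝ) + 1))) :=
    measurable_measure_prodMk_left (measurableSet_d_lt _)
  exact (h.pow_const _).const_mul _

lemma lintegral_discGrad_pow_four (F : HG ≃ₜ HG) (n k : ℕ) :
    ∫⁻ y, discGrad F n k y ^ 4 = 16 * unitVol * (((n + 3 : ℕ) : ℝ≥0∞) * (16 * unitVol)) := by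
  have := isFiniteMeasure_pullEnergy F n
  have hk : 0 < 2 / ((k : ℝ) + 1) := by positivity
  have hmeas := measurableSet_d_lt (2 / ((k : ℝ) + 1))
  have h1 := Measure.prod_apply (μ := (volume : Measure HG)) (ν := pullEnergy F n) hmeas
  rw [Measure.prod_apply_symm hmeas] at h1
  have h2 : ∀ x : HG, volume ((fun y => (y, x)) ⁻¹' {z : HG × HG | d z.1 z.2 < 2 / ((k : ℝ) + 1)})
      = ENNReal.ofReal (2 / ((k : ℝ) + 1)) ^ 4 * unitVol := by
    intro x
    rw [← volume_ball x hk]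
    congr 1
    ext y
    show d y x < _ ↔ d x y < _
    rw [d_comm]
  have h3 : ∀ y, discGrad F n k y ^ 4 =
      ((k + 1 : ℕ) : ℝ≥0∞) ^ 4 * pullEnergy F n (ball y (2 / ((k : ℝ) + 1))) := by
    intro y
    rw [discGrad, mul_pow, ← ENNReal.rpow_natCast (_ ^ (1 / 4 : ℝ)), ← ENNReal.rpow_mul]
    norm_num
  have h4 : ∫⁻ y, pullEnergy F n (ball y (2 / ((k : ℝ) + 1))) =
      ENNReal.ofReal (2 / ((k : ℝ) + 1)) ^ 4 * unitVol * pullEnergy F n univ := by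
    simp only [h2, lintegral_const] at h1
    exact h1.symm
  simp only [h3]
  rw [lintegral_const_mul' _ _ (ENNReal.pow_ne_top (ENNReal.natCast_ne_top _)), h4,
    pullEnergy_univ]
  have h5 : ((k + 1 : ℕ) : ℝ≥0∞) * ENNReal.ofReal (2 / ((k : ℝ) + 1)) = 2 := by
    rw [← ENNReal.ofReal_natCast, ← ENNReal.ofReal_mul (by positivity), ← ENNReal.ofReal_ofNat]
    congr 1
    push_cast
    field_simp
  calc _ = (((k + 1 : ℕ) : ℝ≥0∞) * ENNReal.ofReal (2 / ((k : ℝ) + 1))) ^ 4 * unitVol *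
        (((n + 3 : ℕ) : ℝ≥0∞) * (16 * unitVol)) := by ring
    _ = _ := by rw [h5]; norm_num

/-! ### Points with controlled distortion at small scales -/

/-- The points at which `f` has distortion at most `H` at all scales up to `1 / (k + 1)`. -/
def goodSet (f : HG → HG) (H : ℝ) (k : ℕ) : Set HG :=
  {x | (∀ y, d x y ≤ 1 / ((k : ℝ) + 1) → d (f x) (f y) ≤ 1 / 2) ∧
    ∀ r, 0 < r → r ≤ 1 / ((k : ℝ) + 1) → ∀ y z, d x y ≤ r → r ≤ d x z →
      d (f x) (f y) ≤ H * d (f x) (f z)}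

lemma monotone_goodSet (f : HG → HG) (H : ℝ) : Monotone (goodSet f H) := by
  intro i j hij x hx
  have h : 1 / ((j : ℝ) + 1) ≤ 1 / ((i : ℝ) + 1) := by gcongr
  exact ⟨fun y hy => hx.1 y (hy.trans h), fun r hr hrj => hx.2 r hr (hrj.trans h)⟩

lemma exists_mem_goodSet {f : HG → HG} (hf : Continuous f) {H K : ℝ} (hK : 0 ≤ K) (hKH : K < H)
    {x : HG} (hx : dilat f x ≤ ENNReal.ofReal K) : ∃ k, x ∈ goodSet f H k := by
  have hlt : dilat f x < ENNReal.ofReal H :=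
    hx.trans_lt ((ENNReal.ofReal_lt_ofReal_iff (hK.trans_lt hKH)).2 hKH)
  have hev := eventually_lt_of_limsup_lt hlt (by isBoundedDefault)
  obtain ⟨ε, hε, h⟩ := mem_nhdsGT_iff_exists_Ioo_subset.1 hev
  have hcont : Continuous fun w => d (f x) (f (mul x w)) :=
    (continuous_d_left (f x)).comp (hf.comp (continuous_mul_left x))
  have hnhds : {w : HG | d (f x) (f (mul x w)) < 1 / 2} ∈ 𝓝 (0 : HG) := by
    have := hcont.tendsto 0
    simp only [mul_zero', d_self] at this
    exact this.eventually (gt_mem_nhds (by norm_num))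
  obtain ⟨δ, hδ, hδ'⟩ := exists_knorm_lt_subset hnhds
  obtain ⟨k, hk⟩ := exists_nat_one_div_lt (lt_min (show (0 : ℝ) < ε from hε) hδ)
  refine ⟨k, fun y hy => ?_, fun r hr hrk y z hy hz => ?_⟩
  · have h1 : knorm (mul (inv x) y) < δ := by
      have := d_comm y x
      rw [d] at this
      rw [this]
      exact hy.trans_lt (hk.trans_le (min_le_right _ _))
    have h2 : d (f x) (f (mul x (mul (inv x) y))) < 1 / 2 := hδ' _ h1
    rw [mul_inv_cancel_left'] at h2
    exact h2.le
  · have h1 := h ⟨hr, hrk.trans_lt (hk.trans_le (min_le_left _ _))⟩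
    have h1 := (le_of_lt h1 : _ ≤ ENNReal.ofReal H)
    have hH : 0 < H := hK.trans_lt hKH
    rw [ENNReal.div_le_iff_le_mul (Or.inr ENNReal.ofReal_ne_top)
      (Or.inr (by simpa using hH))] at h1
    have h2 : ENNReal.ofReal (d (f x) (f y)) ≤ ENNReal.ofReal (H * d (f x) (f z)) := by
      rw [ENNReal.ofReal_mul hH.le]
      calc _ ≤ _ := le_iSup₂ (f := fun q (_ : d x q ≤ r) => ENNReal.ofReal (d (f x) (f q))) y hy
        _ ≤ _ := h1
        _ ≤ _ := by
          gcongr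
          exact iInf₂_le (f := fun q (_ : r ≤ d x q) => ENNReal.ofReal (d (f x) (f q))) z hz
    exact (ENNReal.ofReal_le_ofReal_iff (mul_nonneg hH.le (d_nonneg _ _))).1 h2

/-- The constant in `edist_logTest_le`. -/
noncomputable def distConst (H : ℝ) : ℝ≥0∞ := ENNReal.ofReal (4 * H) * unitVol⁻¹ ^ (1 / 4 : ℝ)

lemma distConst_ne_top (H : ℝ) : distConst H ≠ ∞ :=
  ENNReal.mul_ne_top ENNReal.ofReal_ne_top
    (ENNReal.rpow_ne_top_of_nonneg (by norm_num) (ENNReal.inv_ne_top.2 unitVol_ne_zero))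

lemma edist_logTest_le (F : HG ≃ₜ HG) (n : ℕ) {H : ℝ} (hH : 1 ≤ H) {k : ℕ} {x y : HG}
    (hx : x ∈ goodSet F H k) (hxy : d x y ≤ 1 / ((k : ℝ) + 1)) :
    edist (logTest F n y) (logTest F n x) ≤
      distConst H * pullEnergy F n (ball x (1 / ((k : ℝ) + 1))) ^ (1 / 4 : ℝ) := by
  set r := 1 / ((k : ℝ) + 1) with hr
  have hr0 : 0 < r := by positivity
  set δ := d (F x) (F y) with hδ
  have hδ2 : δ ≤ 1 / 2 := hx.1 y hxy
  have hnorm : |knorm (F y) - knorm (F x)| ≤ δ := by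
    rw [hδ, d_comm]; exact abs_knorm_sub_le _ _
  rcases le_or_gt (2 ^ n + 1 / 2) (knorm (F x)) with hfar | hnear
  · rw [logTest, logTest, truncLog_eq_of_far (hnorm.trans hδ2) hfar, edist_self]
    exact zero_le
  rcases (d_nonneg (F x) (F y)).eq_or_lt with h0 | hpos
  · rw [logTest, logTest, eq_of_d_eq_zero h0.symm, edist_self]
    exact zero_le
  have hpos : 0 < δ := hpos
  set a := max 1 (knorm (F x)) with ha
  have ha1 : 1 ≤ a := le_max_left _ _
  have hax : knorm (F x) ≤ a := le_max_right _ _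
  set l := δ / H with hl
  have hH0 : 0 < H := by linarith
  have hl0 : 0 < l := by positivity
  have hlδ : l ≤ δ := div_le_self hpos.le hH
  have hsub : ball (F x) l ⊆ F.symm ⁻¹' ball x r := by
    intro q hq
    have hq : d (F x) q < l := hq
    by_contra hcon
    have hcon : ¬ d x (F.symm q) < r := hcon
    have h1 := hx.2 r hr0 le_rfl y (F.symm q) hxy (not_lt.1 hcon)
    rw [F.apply_symm_apply] at h1
    have h2 : H * d (F x) q < δ := by
      rw [hl, lt_div_iff₀ hH0] at hq
      linarith
    linarith
  have hmass : ENNReal.ofReal (2 * a)⁻¹ ^ 4 * (ENNReal.ofReal l ^ 4 * unitVol) ≤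
      pullEnergy F n (ball x r) := by
    rw [pullEnergy, Measure.map_apply F.symm.continuous.measurable (measurableSet_ball _ _)]
    refine le_trans ?_ (measure_mono hsub)
    rw [withDensity_apply _ (measurableSet_ball _ _), ← volume_ball (F x) hl0,
      ← setLIntegral_const]
    refine setLIntegral_mono' (measurableSet_ball _ _) fun q hq => ?_
    have hq : d (F x) q < l := hq
    have h1 := abs_knorm_sub_le (F x) q
    rw [abs_le] at h1
    have h2 : (1 : ℝ) ≤ 2 ^ n := one_le_pow₀ (by norm_num)
    refine le_logDensity ?_ (by linarith) (by linarith)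
    rw [pow_add]
    linarith
  have hdist : edist (logTest F n y) (logTest F n x) ≤
      ENNReal.ofReal (4 * H) * (ENNReal.ofReal (2 * a)⁻¹ * ENNReal.ofReal l) := by
    rw [← ENNReal.ofReal_mul (by positivity), ← ENNReal.ofReal_mul (by positivity), edist_dist,
      Real.dist_eq]
    refine ENNReal.ofReal_le_ofReal ?_
    calc _ ≤ 2 * |knorm (F y) - knorm (F x)| / a := abs_truncLog_sub_le (hnorm.trans hδ2) hnear
      _ ≤ 2 * δ / a := by gcongr
      _ = _ := by
        rw [hl]
        field_simp
        norm_num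
  refine hdist.trans ?_
  rw [distConst, mul_assoc]
  refine mul_le_mul_right ?_ _
  calc ENNReal.ofReal (2 * a)⁻¹ * ENNReal.ofReal l
      = ((ENNReal.ofReal (2 * a)⁻¹ * ENNReal.ofReal l) ^ 4) ^ (1 / 4 : ℝ) := by
        rw [← ENNReal.rpow_natCast, ← ENNReal.rpow_mul]; norm_num
    _ = (unitVol⁻¹ * (ENNReal.ofReal (2 * a)⁻¹ ^ 4 * (ENNReal.ofReal l ^ 4 * unitVol)))
          ^ (1 / 4 : ℝ) := by
        congr 1
        calc _ = (unitVol⁻¹ * unitVol) * (ENNReal.ofReal (2 * a)⁻¹ ^ 4 * ENNReal.ofReal l ^ 4) := by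
              rw [ENNReal.inv_mul_cancel unitVol_ne_zero unitVol_ne_top, one_mul, mul_pow]
          _ = _ := by ring
    _ ≤ (unitVol⁻¹ * pullEnergy F n (ball x r)) ^ (1 / 4 : ℝ) := by gcongr
    _ = _ := ENNReal.mul_rpow_of_nonneg _ _ (by norm_num)

lemma volume_image_line_le (F : HG ≃ₜ HG) (n : ℕ) {H : ℝ} (hH : 1 ≤ H) (k : ℕ) {e : ℝ × ℝ}
    (he : e.1 ^ 2 + e.2 ^ 2 = 1) (p : HG) {s : Set ℝ}
    (hs : s ⊆ {t | mul p (hor e t) ∈ goodSet F H k}) :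
    volume ((fun t => logTest F n (mul p (hor e t))) '' s) ≤
      2 * distConst H * ∫⁻ t in Metric.thickening (2 / ((k : ℝ) + 1)) s,
        discGrad F n k (mul p (hor e t)) := by
  set w : ℝ → ℝ := fun t => logTest F n (mul p (hor e t)) with hw
  set r := 1 / ((k : ℝ) + 1) with hr
  have hr0 : 0 < r := by positivity
  have h2r : 2 / ((k : ℝ) + 1) = 2 * r := by rw [hr]; ring
  let I : ℤ → Set ℝ := fun j => Ico (j • r) ((j + 1) • r)
  have hIu : ⋃ j, I j = univ := iUnion_Ico_zsmul hr0
  have hId : Pairwise (Function.onFun Disjoint I) := pairwise_disjoint_Ico_zsmul r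
  set U := Metric.thickening (2 / ((k : ℝ) + 1)) s with hU
  have hUm : MeasurableSet U := Metric.isOpen_thickening.measurableSet
  have piece : ∀ j, volume (w '' (s ∩ I j)) ≤
      2 * distConst H * ∫⁻ t in U ∩ I j, discGrad F n k (mul p (hor e t)) := by
    intro j
    rcases (s ∩ I j).eq_empty_or_nonempty with h0 | ⟨s₀, hs₀, hs₀I⟩
    · rw [h0]; simp
    have hlen : ∀ t ∈ I j, |s₀ - t| < r := fun t ht => by
      have h1 := hs₀I
      simp only [I, mem_Ico, add_smul, one_smul] at h1 ht
      rw [abs_lt]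
      constructor <;> linarith [h1.1, h1.2, ht.1, ht.2]
    have hIU : I j ⊆ U := fun t ht => by
      rw [hU, Metric.mem_thickening_iff]
      refine ⟨s₀, hs₀, ?_⟩
      rw [Real.dist_eq, abs_sub_comm, h2r]
      linarith [hlen t ht]
    set x₀ := mul p (hor e s₀) with hx₀
    set m := pullEnergy F n (ball x₀ r) ^ (1 / 4 : ℝ) with hm
    have himg : w '' (s ∩ I j) ⊆ Metric.closedEBall (w s₀) (distConst H * m) := by
      rintro _ ⟨t, ht, rfl⟩
      refine edist_logTest_le F n hH (hs hs₀) ?_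
      rw [d_hor he]
      exact (hlen t ht.2).le
    have hgrad : m ≤ ∫⁻ t in U ∩ I j, discGrad F n k (mul p (hor e t)) := by
      rw [inter_eq_self_of_subset_right hIU]
      calc m = ((k + 1 : ℕ) : ℝ≥0∞) * m * volume (I j) := by
            simp only [I, Real.volume_Ico, add_smul, one_smul, add_sub_cancel_left]
            rw [mul_right_comm, ← ENNReal.ofReal_natCast, ← ENNReal.ofReal_mul (by positivity), hr]
            have : ((k + 1 : ℕ) : ℝ) * (1 / ((k : ℝ) + 1)) = 1 := by
              push_cast; field_simp
            rw [this, ENNReal.ofReal_one, one_mul]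
        _ = ∫⁻ _t in I j, ((k + 1 : ℕ) : ℝ≥0∞) * m := (setLIntegral_const _ _).symm
        _ ≤ _ := by
            refine setLIntegral_mono' measurableSet_Ico fun t ht => ?_
            rw [discGrad, hm]
            gcongr
            refine ball_subset_ball ?_
            rw [hx₀, d_hor he, h2r, abs_sub_comm]
            linarith [hlen t ht]
    calc volume (w '' (s ∩ I j)) ≤ volume (Metric.closedEBall (w s₀) (distConst H * m)) :=
          measure_mono himg
      _ = 2 * (distConst H * m) := Real.volume_closedEBall _ _
      _ ≤ _ := by rw [← mul_assoc]; gcongr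
  calc volume (w '' s) ≤ volume (⋃ j, w '' (s ∩ I j)) := by
        rw [← image_iUnion, ← inter_iUnion, hIu, inter_univ]
    _ ≤ ∑' j, volume (w '' (s ∩ I j)) := measure_iUnion_le _
    _ ≤ ∑' j, 2 * distConst H * ∫⁻ t in U ∩ I j, discGrad F n k (mul p (hor e t)) :=
        ENNReal.tsum_le_tsum piece
    _ = 2 * distConst H * ∫⁻ t in U, discGrad F n k (mul p (hor e t)) := by
        rw [ENNReal.tsum_mul_left, ← lintegral_iUnion (fun j => hUm.inter measurableSet_Ico)
          (fun i j hij => (hId hij).mono inter_subset_right inter_subset_right), ← inter_iUnion,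
          hIu, inter_univ]

lemma ae_ae_line {Q : HG → Prop} (hQ : ∀ᵐ x : HG, Q x) (e : ℝ × ℝ) :
    ∀ᵐ p : HG, ∀ᵐ s : ℝ, Q (mul p (hor e s)) := by
  set Z := toMeasurable volume {x : HG | ¬ Q x} with hZ
  have hZ0 : volume Z = 0 := by rw [hZ, measure_toMeasurable]; exact hQ
  have hZm : MeasurableSet Z := measurableSet_toMeasurable _ _
  have h1 : ∀ᵐ s : ℝ, ∀ᵐ p : HG, mul p (hor e s) ∉ Z := ae_of_all _ fun s =>
    (measurePreserving_mul_right (hor e s)).quasiMeasurePreserving.ae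
      (measure_eq_zero_iff_ae_notMem.1 hZ0)
  have hm : MeasurableSet {z : ℝ × HG | mul z.2 (hor e z.1) ∉ Z} :=
    (continuous_mul.comp (continuous_snd.prodMk
      ((continuous_hor e).comp continuous_fst))).measurable hZm.compl
  rw [Measure.ae_ae_comm hm] at h1
  filter_upwards [h1] with p hp
  filter_upwards [hp] with s hs
  by_contra hcon
  exact hs (subset_toMeasurable _ _ hcon)

theorem lineBound_logTest (F : HG ≃ₜ HG) (n : ℕ) {K M : ℝ} (hK : 0 ≤ K) (hM : 0 ≤ M)
    (hFM : ∀ p, dilat F p ≤ ENNReal.ofReal M)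
    (hFK : ∀ᵐ p : HG, dilat F p ≤ ENNReal.ofReal K) :
    LineBound (logTest F n) (discGrad F n) (2 * distConst (K + 1)) := by
  intro e he S hS
  have hmeas : ∀ k, Measurable fun z : HG × ℝ => discGrad F n k (mul z.1 (hor e z.2)) ^ 4 :=
    fun k => (measurable_line (measurable_discGrad F n k) e).pow_const 4
  have hmeas' : ∀ k, Measurable fun p : HG =>
      ∫⁻ s in Ioo (-1) (S + 1), discGrad F n k (mul p (hor e s)) ^ 4 :=
    fun k => (hmeas k).lintegral_prod_right'
  have hfin : ∀ᵐ p : HG, liminf (fun k =>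
      ∫⁻ s in Ioo (-1) (S + 1), discGrad F n k (mul p (hor e s)) ^ 4) atTop < ∞ := by
    refine ae_lt_top (Measurable.liminf hmeas') (ne_of_lt ?_)
    set E := 16 * unitVol * (((n + 3 : ℕ) : ℝ≥0∞) * (16 * unitVol)) with hE
    have hEt : E < ∞ := ENNReal.mul_lt_top (ENNReal.mul_lt_top (by norm_num) unitVol_ne_top.lt_top)
      (ENNReal.mul_lt_top (ENNReal.natCast_lt_top _)
        (ENNReal.mul_lt_top (by norm_num) unitVol_ne_top.lt_top))
    refine (lintegral_liminf_le hmeas').trans_lt (lt_of_le_of_lt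
      (liminf_le_of_frequently_le' (Frequently.of_forall fun k => ?_))
      (ENNReal.mul_lt_top hEt (measure_Ioo_lt_top (μ := volume) (a := -1) (b := S + 1))))
    rw [lintegral_lintegral_swap (hmeas k).aemeasurable, ← setLIntegral_const]
    refine lintegral_mono fun s => ?_
    rw [(measurePreserving_mul_right (hor e s)).lintegral_comp
      ((measurable_discGrad F n k).pow_const 4), lintegral_discGrad_pow_four]
  filter_upwards [hfin, ae_ae_line hFK e] with p hp hpK
  set w : ℝ → ℝ := fun t => logTest F n (mul p (hor e t)) with hw
  have hwc : Continuous w := (continuous_logTest F.continuous n).comp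
    ((continuous_mul_left p).comp (continuous_hor e))
  have hmono : ∀ H, Monotone fun k => {t | mul p (hor e t) ∈ goodSet F H k} :=
    fun H i j hij t ht => monotone_goodSet F H hij ht
  have hMu : ⋃ k, {t | mul p (hor e t) ∈ goodSet F (M + 1) k} = univ := by
    refine eq_univ_of_forall fun t => mem_iUnion.2 ?_
    exact exists_mem_goodSet F.continuous hM (lt_add_one M) (hFM _)
  have hC : ∀ H, 2 * distConst H ≠ ∞ := fun H =>
    ENNReal.mul_ne_top (by norm_num) (distConst_ne_top H)
  have hPm : ∀ k, Measurable fun t => discGrad F n k (mul p (hor e t)) := fun k =>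
    (measurable_discGrad F n k).comp
      ((continuous_mul_left p).comp (continuous_hor e)).measurable
  have hcov : ∀ H, 1 ≤ H → ∀ k : ℕ, ∀ s ⊆ {t | mul p (hor e t) ∈ goodSet F H k},
      volume (w '' s) ≤ 2 * distConst H * ∫⁻ t in Metric.thickening (2 / ((k : ℝ) + 1)) s,
        discGrad F n k (mul p (hor e t)) :=
    fun H hH k s hs => volume_image_line_le F n hH k he p hs
  have hnull : volume (w '' (Icc 0 S \ ⋃ k, {t | mul p (hor e t) ∈ goodSet F (K + 1) k})) = 0 := by
    refine volume_image_null (P := fun k t => discGrad F n k (mul p (hor e t))) (a := -1)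
      (b := S + 1) hPm (hmono (M + 1)) hMu (hC (M + 1))
      (hcov (M + 1) (by linarith)) hp ?_ ?_
    · rintro t ⟨⟨h1, h2⟩, -⟩
      exact ⟨by linarith, by linarith⟩
    · refine measure_mono_null ?_ hpK
      rintro t ⟨-, ht⟩ hcon
      exact ht (mem_iUnion.2 (exists_mem_goodSet F.continuous hK (lt_add_one K) hcon))
  have := edist_le_liminf_of_cover hwc (P := fun k t => discGrad F n k (mul p (hor e t))) hS
    (hmono (K + 1)) (hC (K + 1))
    (hcov (K + 1) (by linarith)) hnull
  have h0 : mul p (hor e 0) = p := by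
    rw [show hor e 0 = 0 by ext <;> simp [hor], mul_zero']
  simpa only [hw, h0] using this

/-! ### Continua in the source -/

lemma continuous_dil_left (q : HG) : Continuous fun s : ℝ => dil s q := by
  unfold dil; fun_prop

lemma exists_knorm_eq_of_le_one (F : HG ≃ₜ HG) (h0 : F 0 = 0) {p : HG} (hp : knorm p = 1)
    (hFp : knorm (F p) = 1) {τ : ℝ} (hτ : τ ∈ Icc (0 : ℝ) 1) :
    ∃ x, knorm x = τ ∧ knorm (F x) ≤ 1 := by
  have hc : Continuous fun s : ℝ => knorm (F.symm (dil s (F p))) :=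
    continuous_knorm.comp (F.symm.continuous.comp (continuous_dil_left _))
  have hsub := intermediate_value_Icc zero_le_one (hc.continuousOn (s := Icc 0 1))
  have e0 : knorm (F.symm (dil 0 (F p))) = 0 := by
    rw [show dil 0 (F p) = 0 by ext <;> simp [dil], ← h0, F.symm_apply_apply, knorm_zero]
  have e1 : knorm (F.symm (dil 1 (F p))) = 1 := by
    rw [show dil 1 (F p) = F p by ext <;> simp [dil], F.symm_apply_apply, hp]
  simp only [e0, e1] at hsub
  obtain ⟨s, hs, hsτ⟩ := hsub hτ
  refine ⟨_, hsτ, ?_⟩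
  rw [F.apply_symm_apply, knorm_dil hs.1, hFp, mul_one]
  exact hs.2

lemma exists_knorm_eq_of_ge (F : HG ≃ₜ HG) {L : ℝ} (hL : 0 < L) {p : HG}
    (hFp : L ≤ knorm (F p)) {σ : ℝ} (hσ : knorm p ≤ σ) :
    ∃ x, knorm x = σ ∧ L ≤ knorm (F x) := by
  have hc : Continuous fun s : ℝ => knorm (F.symm (dil s (F p))) :=
    continuous_knorm.comp (F.symm.continuous.comp (continuous_dil_left _))
  have e1 : knorm (F.symm (dil 1 (F p))) = knorm p := by
    rw [show dil 1 (F p) = F p by ext <;> simp [dil], F.symm_apply_apply]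
  obtain ⟨b, hb⟩ := ((isCompact_knorm_le σ).image
    (continuous_knorm.comp F.continuous)).bddAbove
  set s₁ := max 1 ((b + 1) / L) with hs₁
  have h1 : 1 ≤ s₁ := le_max_left _ _
  have hfar : σ ≤ knorm (F.symm (dil s₁ (F p))) := by
    by_contra hcon
    have h2 := hb (mem_image_of_mem _ (show F.symm (dil s₁ (F p)) ∈ {p | knorm p ≤ σ} from
      (not_le.1 hcon).le))
    simp only [Function.comp_apply, F.apply_symm_apply, knorm_dil (zero_le_one.trans h1)] at h2
    have h3 : b + 1 ≤ s₁ * L := (div_le_iff₀ hL).1 (le_max_right _ _)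
    have h4 : s₁ * L ≤ s₁ * knorm (F p) := by gcongr
    linarith
  have hsub := intermediate_value_Icc h1 (hc.continuousOn (s := Icc 1 s₁))
  simp only [e1] at hsub
  obtain ⟨s, hs, hsσ⟩ := hsub ⟨hσ, hfar⟩
  refine ⟨_, hsσ, ?_⟩
  rw [F.apply_symm_apply, knorm_dil (zero_le_one.trans hs.1)]
  have := hs.1
  nlinarith

lemma truncLog_of_le_one {n : ℕ} {s : ℝ} (hs : s ≤ 1) : truncLog n s = 0 := by
  rw [truncLog, max_eq_left hs, min_eq_left (one_le_pow₀ (by norm_num)), Real.log_one]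

lemma truncLog_of_ge {n : ℕ} {s : ℝ} (hs : 2 ^ n ≤ s) : truncLog n s = n * Real.log 2 := by
  rw [truncLog, min_eq_right (hs.trans (le_max_right _ _)), Real.log_pow]

/-- A constant depending only on `K` and `R`. -/
noncomputable def growthConst (K R : ℝ) : ℝ≥0∞ :=
  poincareConst * (2 * distConst (K + 1)) * (chainConst (R + 1) *
    (16 * unitVol * (16 * unitVol)) ^ (1 / 4 : ℝ))

lemma growthConst_ne_top (K R : ℝ) : growthConst K R ≠ ∞ := by
  have h16 : 16 * unitVol ≠ ∞ := ENNReal.mul_ne_top (by norm_num) unitVol_ne_top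
  exact ENNReal.mul_ne_top
    (ENNReal.mul_ne_top poincareConst_ne_top
      (ENNReal.mul_ne_top (by norm_num) (distConst_ne_top _)))
    (ENNReal.mul_ne_top (chainConst_ne_top _)
      (ENNReal.rpow_ne_top_of_nonneg (by norm_num) (ENNReal.mul_ne_top h16 h16)))

theorem growth_bound {K R : ℝ} (hK : 0 ≤ K) (hR : 0 ≤ R) {g : HG → HG} (hg : g ∈ Q0 K) {n : ℕ}
    {p : HG} (hp : knorm p ≤ R) (hgp : 2 ^ n ≤ knorm (g p)) :
    n * Real.log 2 ≤
      2 * (1 + (growthConst K R).toReal * ((n + 3 : ℕ) : ℝ) ^ (1 / 4 : ℝ)) := by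
  obtain ⟨⟨⟨hhom, M, hM⟩, hKae⟩, hg0, p₁, hp₁, hgp₁⟩ := hg
  set F : HG ≃ₜ HG := hhom.homeomorph g with hF
  have hFg : (F : HG → HG) = g := rfl
  rw [← hFg] at hM hKae hg0 hgp₁ hgp
  have hline := lineBound_logTest F n (M := M) hK M.2 (by simpa using hM) hKae
  have h := hline.edist_le (continuous_logTest F.continuous n) (measurable_discGrad F n)
    (ENNReal.mul_ne_top (by norm_num) (distConst_ne_top _))
    (fun k => (lintegral_discGrad_pow_four F n k).le) hR (α := 0) (β := n * Real.log 2)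
    (fun τ hτ => by
      obtain ⟨x, hx, hFx⟩ := exists_knorm_eq_of_le_one F hg0 hp₁ hgp₁ hτ
      exact ⟨x, hx, truncLog_of_le_one hFx⟩)
    (fun τ hτ => by
      obtain ⟨x, hx, hFx⟩ := exists_knorm_eq_of_ge F (by positivity) hgp
        (show knorm p ≤ R + τ by linarith [hτ.1])
      exact ⟨x, hx, truncLog_of_ge hFx⟩)
  have hlog : 0 ≤ n * Real.log 2 := mul_nonneg (by positivity) (Real.log_nonneg (by norm_num))
  have hW : (16 * unitVol * (((n + 3 : ℕ) : ℝ≥0∞) * (16 * unitVol))) ^ (1 / 4 : ℝ) =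
      (16 * unitVol * (16 * unitVol)) ^ (1 / 4 : ℝ) * ((n + 3 : ℕ) : ℝ≥0∞) ^ (1 / 4 : ℝ) := by
    rw [← ENNReal.mul_rpow_of_nonneg _ _ (by norm_num)]
    congr 1
    ring
  rw [edist_dist, Real.dist_eq, zero_sub, abs_neg, abs_of_nonneg hlog, hW, ← mul_assoc (chainConst _),
    ← mul_assoc (poincareConst * _), ← growthConst, ← ENNReal.ofReal_toReal (growthConst_ne_top K R),
    ← ENNReal.ofReal_natCast, ENNReal.ofReal_rpow_of_nonneg (by positivity) (by norm_num),
    ← ENNReal.ofReal_mul ENNReal.toReal_nonneg, ← ENNReal.ofReal_one,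
    ← ENNReal.ofReal_add (by norm_num) (by positivity), ← ENNReal.ofReal_ofNat,
    ← ENNReal.ofReal_mul (by norm_num), ENNReal.ofReal_le_ofReal_iff (by positivity)] at h
  exact h

lemma exists_growth_violation {D : ℝ} (hD : 0 ≤ D) :
    ∃ n : ℕ, 2 * (1 + D * ((n + 3 : ℕ) : ℝ) ^ (1 / 4 : ℝ)) < n * Real.log 2 := by
  obtain ⟨m, hm⟩ := exists_nat_ge (4 * D + 8)
  have hm8 : (8 : ℝ) ≤ m := by linarith
  have hm3 : 3 ≤ m ^ 4 := by
    have h8 : 8 ≤ m := by exact_mod_cast hm8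
    calc 3 ≤ 8 ^ 4 := by norm_num
      _ ≤ m ^ 4 := by gcongr
  refine ⟨m ^ 4 - 3, ?_⟩
  rw [Nat.sub_add_cancel hm3, Nat.cast_sub hm3, Nat.cast_pow,
    show (1 / 4 : ℝ) = ((4 : ℕ) : ℝ)⁻¹ by norm_num, Real.pow_rpow_inv_natCast (by positivity)
      (by norm_num)]
  have hlog : (1 / 2 : ℝ) < Real.log 2 := by linarith [Real.log_two_gt_d9]
  have h1 : (64 : ℝ) ≤ (m : ℝ) ^ 2 := by nlinarith
  have h2 : (m : ℝ) * (4 * D + 8) ≤ (m : ℝ) ^ 2 := by nlinarith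
  have h3 : (64 : ℝ) * (m : ℝ) ^ 2 ≤ (m : ℝ) ^ 4 := by nlinarith
  have h4 : 0 ≤ (m : ℝ) * D := by positivity
  push_cast
  nlinarith

end Heis

theorem stmt3 (R K : ℝ) (hR : 0 < R) (hK : 1 ≤ K) :
    ∃ R' : ℝ, 0 < R' ∧ ∀ g ∈ Heis.Q0 K, g '' Heis.ball 0 R ⊆ Heis.ball 0 R' := by
  obtain ⟨n, hn⟩ := Heis.exists_growth_violation
    (D := (Heis.growthConst K R).toReal) ENNReal.toReal_nonneg
  refine ⟨2 ^ n, by positivity, fun g hg => ?_⟩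
  rintro _ ⟨p, hp, rfl⟩
  have hp : Heis.d 0 p < R := hp
  rw [Heis.d_zero_left] at hp
  show Heis.d 0 (g p) < 2 ^ n
  rw [Heis.d_zero_left]
  by_contra hcon
  exact absurd (Heis.growth_bound (by linarith) hR.le hg hp.le (not_lt.1 hcon)) (not_le.2 hn)
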